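/- (Consequence of the sup + inf inequality at the blow-up point.) Under the blow-up setup, there is a constant C' independent of i such that u_i(x_i) + 4 log δ_i ≤ C' for all i, where δ_i = d(x_i, ∂Ω). -/

import Mathlib

open MeasureTheory Filter Metric

abbrev E2 := EuclideanSpace ℝ (Fin 2)

noncomputable def pd (j : Fin 2) (u : E2 → ℝ) (x : E2) : ℝ :=
  fderiv ℝ u x (EuclideanSpace.single j 1)

noncomputable def lapl (u : E2 → ℝ) (x : E2) : ℝ :=
  pd 0 (pd 0 u) x + pd 1 (pd 1 u) x

/-
In the Emden-Fowler coordinates `φ z = u (c + exp z) + 2 re z` the equation `-Δ u = V exp u` on a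
disc becomes `-Δ φ = W exp φ` on a half-cylinder, and `u c + inf u + 4 log d` is large exactly when
`φ` is still large at the end of the cylinder compared with its profile around its peak, which sits
near `re z = -u c / 2`. Moving planes from `re z = -∞` then show that `φ` increases in `re z`
slightly beyond the peak; the reflection changes `W` by a Hölder error, which a small barrier
absorbs. Past the peak this is impossible for long: the vertical mean of `φ` is concave with slope
at most `2` and, while `φ` increases, stays above a fixed bound, so by Jensen's inequality its
second derivative is at most a fixed negative constant and its slope turns negative after a bounded
length.

To apply this on the disc of radius `δ` about the maximum point, note that `u ≥ 0` by the minimum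
principle and that the mass of `V exp u` near that point keeps `V` away from zero there.
-/

open Set Topology InnerProductSpace Laplacian ComplexConjugate

section SecondDerivative

variable {E F G : Type*} [NormedAddCommGroup E] [NormedSpace ℝ E] [NormedAddCommGroup F]
  [NormedSpace ℝ F] [NormedAddCommGroup G] [NormedSpace ℝ G]

theorem eventually_lt_right_of_deriv_deriv_neg {f : ℝ → ℝ} {x : ℝ} (hf : ContDiffAt ℝ 2 f x)
    (h₁ : deriv f x ≤ 0) (h₂ : deriv (deriv f) x < 0) : ∀ᶠ y in 𝓝[>] x, f y < f x := by
  have hdiff : ∀ᶠ y in 𝓝 x, DifferentiableAt ℝ f y :=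
    (hf.eventually (by simp)).mono fun y hy ↦ hy.differentiableAt (by norm_num)
  have hderiv : ∀ᶠ y in 𝓝 x, x < y → deriv f y < 0 := by
    have hsub : deriv (fun y ↦ deriv f y - deriv f x) x < 0 := by rwa [deriv_sub_const]
    filter_upwards [eventually_nhdsWithin_sign_eq_of_deriv_neg hsub (sub_self _)] with y hy hxy
    have : deriv f y - deriv f x < 0 := by
      rwa [← sign_eq_neg_one_iff, hy, sign_eq_neg_one_iff, sub_neg]
    linarith
  obtain ⟨ε, hε, hball⟩ := Metric.eventually_nhds_iff_ball.1 (hdiff.and hderiv)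
  filter_upwards [Ioo_mem_nhdsGT (lt_add_of_pos_right x hε)] with y hy
  have hsub : ∀ w ∈ Icc x y, w ∈ ball x ε := fun w hw ↦ by
    rw [Real.ball_eq_Ioo]; exact ⟨by linarith [hw.1], by linarith [hw.2, hy.2]⟩
  have hanti : StrictAntiOn f (Icc x y) := by
    refine strictAntiOn_of_deriv_neg (convex_Icc x y)
      (fun w hw ↦ (hball w (hsub w hw)).1.continuousAt.continuousWithinAt) fun w hw ↦ ?_
    rw [interior_Icc] at hw
    exact (hball w (hsub w (Ioo_subset_Icc_self hw))).2 hw.1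
  exact hanti (left_mem_Icc.2 hy.1.le) (right_mem_Icc.2 hy.1.le) hy.1

theorem fderiv_fderiv_comp {f : F → G} {g : E → F} {x : E} (hf : ContDiffAt ℝ 2 f (g x))
    (hg : ContDiffAt ℝ 2 g x) (v w : E) :
    fderiv ℝ (fderiv ℝ (f ∘ g)) x v w =
      fderiv ℝ (fderiv ℝ f) (g x) (fderiv ℝ g x v) (fderiv ℝ g x w) +
        fderiv ℝ f (g x) (fderiv ℝ (fderiv ℝ g) x v w) := by
  have hchain : fderiv ℝ (f ∘ g) =ᶠ[𝓝 x] fun y ↦ (fderiv ℝ f (g y)).comp (fderiv ℝ g y) := by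
    filter_upwards [hg.continuousAt.eventually (hf.eventually (by simp)),
      hg.eventually (by simp)] with y hfy hgy
    exact fderiv_comp y (hfy.differentiableAt (by norm_num)) (hgy.differentiableAt (by norm_num))
  have hDf : DifferentiableAt ℝ (fderiv ℝ f) (g x) :=
    (hf.fderiv_right (m := 1) (by norm_num)).differentiableAt (by norm_num)
  have hDg : DifferentiableAt ℝ (fderiv ℝ g) x :=
    (hg.fderiv_right (m := 1) (by norm_num)).differentiableAt (by norm_num)
  have hg' := hg.differentiableAt (by norm_num)
  have key := ((hDf.hasFDerivAt.comp x hg'.hasFDerivAt).clm_comp hDg.hasFDerivAt).fderiv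
  rw [hchain.fderiv_eq]
  simp only [Function.comp_def] at key
  rw [key]
  simp [add_comm]

theorem fderiv_fderiv_apply_const {f : E → F} {x : E} (hf : ContDiffAt ℝ 2 f x) (v w : E) :
    fderiv ℝ (fun y ↦ fderiv ℝ f y w) x v = fderiv ℝ (fderiv ℝ f) x v w := by
  have hDf : DifferentiableAt ℝ (fderiv ℝ f) x :=
    (hf.fderiv_right (m := 1) (by norm_num)).differentiableAt (by norm_num)
  simp [fderiv_clm_apply hDf (differentiableAt_const w)]

theorem hasDerivAt_comp_line {f : E → F} {x v : E} {t : ℝ}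
    (hf : DifferentiableAt ℝ f (x + t • v)) :
    HasDerivAt (fun τ : ℝ ↦ f (x + τ • v)) (fderiv ℝ f (x + t • v) v) t := by
  have hline : HasDerivAt (fun τ : ℝ ↦ x + τ • v) v t := by
    simpa using ((hasDerivAt_id t).smul_const v).const_add x
  exact hf.hasFDerivAt.comp_hasDerivAt t hline

theorem hasDerivAt_fderiv_comp_line {f : E → F} {x v : E} {t : ℝ}
    (hf : ContDiffAt ℝ 2 f (x + t • v)) (w : E) :
    HasDerivAt (fun τ : ℝ ↦ fderiv ℝ f (x + τ • v) w)
      (fderiv ℝ (fderiv ℝ f) (x + t • v) v w) t := by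
  have hDf : DifferentiableAt ℝ (fderiv ℝ f) (x + t • v) :=
    (hf.fderiv_right (m := 1) (by norm_num)).differentiableAt (by norm_num)
  simpa using (hasDerivAt_comp_line hDf).clm_apply (hasDerivAt_const t w)

theorem deriv_deriv_comp_line {f : E → F} {x : E} (hf : ContDiffAt ℝ 2 f x) (v : E) :
    deriv (deriv fun t : ℝ ↦ f (x + t • v)) 0 = fderiv ℝ (fderiv ℝ f) x v v := by
  have hline : Tendsto (fun t : ℝ ↦ x + t • v) (𝓝 0) (𝓝 x) :=
    Continuous.tendsto' (by fun_prop) _ _ (by simp)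
  have hderiv : deriv (fun t : ℝ ↦ f (x + t • v)) =ᶠ[𝓝 0]
      fun t ↦ fderiv ℝ f (x + t • v) v := by
    filter_upwards [hline.eventually (hf.eventually (by simp))] with t ht
    exact (hasDerivAt_comp_line (ht.differentiableAt (by norm_num))).deriv
  rw [hderiv.deriv_eq]
  simpa using (hasDerivAt_fderiv_comp_line (t := 0) (by simpa using hf) v).deriv

theorem contDiffAt_comp_line {f : E → F} {x : E} {n : WithTop ℕ∞} (hf : ContDiffAt ℝ n f x)
    (v : E) : ContDiffAt ℝ n (fun t : ℝ ↦ f (x + t • v)) 0 :=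
  ContDiffAt.comp (0 : ℝ) (by simpa using hf) (by fun_prop)

theorem fderiv_fderiv_nonneg_of_isLocalMin {f : E → ℝ} {x : E} (h : IsLocalMin f x)
    (hf : ContDiffAt ℝ 2 f x) (v : E) : 0 ≤ fderiv ℝ (fderiv ℝ f) x v v := by
  by_contra! hneg
  have hline : Tendsto (fun t : ℝ ↦ x + t • v) (𝓝 0) (𝓝 x) :=
    Continuous.tendsto' (by fun_prop) _ _ (by simp)
  have hderiv : deriv (fun t : ℝ ↦ f (x + t • v)) 0 = 0 := congrFun h.lineDeriv_eq_zero v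
  obtain ⟨t, hlt, hle⟩ := ((eventually_lt_right_of_deriv_deriv_neg (contDiffAt_comp_line hf v)
    hderiv.le (by rwa [deriv_deriv_comp_line hf])).and
      (nhdsWithin_le_nhds (hline.eventually h))).exists
  exact hlt.not_ge (by simpa using hle)

end SecondDerivative

section Laplacian

variable {E F : Type*} [NormedAddCommGroup E] [InnerProductSpace ℝ E] [FiniteDimensional ℝ E]
  [NormedAddCommGroup F] [InnerProductSpace ℝ F] [FiniteDimensional ℝ F]

theorem laplacian_eq_sum_fderiv_fderiv {ι : Type*} [Fintype ι] (b : OrthonormalBasis ι ℝ E)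
    (f : E → ℝ) (x : E) : Δ f x = ∑ i, fderiv ℝ (fderiv ℝ f) x (b i) (b i) := by
  simp [laplacian_eq_iteratedFDeriv_orthonormalBasis f b, iteratedFDeriv_two_apply]

theorem laplacian_eq_fderiv_fderiv_complex (f : ℂ → ℝ) (z : ℂ) :
    Δ f z = fderiv ℝ (fderiv ℝ f) z 1 1 +
      fderiv ℝ (fderiv ℝ f) z Complex.I Complex.I := by
  simp [laplacian_eq_sum_fderiv_fderiv Complex.orthonormalBasisOneI]

theorem laplacian_nonneg_of_isLocalMin {f : E → ℝ} {x : E} (h : IsLocalMin f x)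
    (hf : ContDiffAt ℝ 2 f x) : 0 ≤ Δ f x := by
  rw [laplacian_eq_sum_fderiv_fderiv (stdOrthonormalBasis ℝ E)]
  exact Finset.sum_nonneg fun i _ ↦ fderiv_fderiv_nonneg_of_isLocalMin h hf _

theorem laplacian_comp_of_fderiv_eq_smul_isometry {f : F → ℝ} {g : E → F} {x : E} {c : ℝ}
    {L : E ≃ₗᵢ[ℝ] F} (hf : ContDiffAt ℝ 2 f (g x)) (hg : ContDiffAt ℝ 2 g x)
    (hharm : Δ g x = 0) (hconf : ∀ v, fderiv ℝ g x v = c • L v) :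
    Δ (f ∘ g) x = c ^ 2 * Δ f (g x) := by
  set b := stdOrthonormalBasis ℝ E
  have hsum : ∑ i, fderiv ℝ (fderiv ℝ g) x (b i) (b i) = 0 := by
    simpa [laplacian_eq_iteratedFDeriv_orthonormalBasis g b, iteratedFDeriv_two_apply] using hharm
  rw [laplacian_eq_sum_fderiv_fderiv b, laplacian_eq_sum_fderiv_fderiv (b.map L)]
  simp only [fderiv_fderiv_comp hf hg, hconf, Finset.sum_add_distrib, ← map_sum, hsum, map_zero,
    add_zero, map_smul, _root_.smul_apply, smul_eq_mul, Finset.mul_sum,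
    OrthonormalBasis.map_apply]
  exact Finset.sum_congr rfl fun i _ ↦ by ring

theorem laplacian_comp_const_add_isometry {f : F → ℝ} {x : E} (c : F) (L : E ≃ₗᵢ[ℝ] F)
    (hf : ContDiffAt ℝ 2 f (c + L x)) :
    Δ (fun y ↦ f (c + L y)) x = Δ f (c + L x) := by
  have hderiv (y : E) : fderiv ℝ (fun y ↦ c + L y) y = L.toContinuousLinearEquiv := by
    rw [fderiv_const_add]
    exact L.toContinuousLinearEquiv.fderiv
  have hharm : Δ (fun y ↦ c + L y) x = 0 := by
    simp [laplacian_eq_iteratedFDeriv_stdOrthonormalBasis, iteratedFDeriv_two_apply,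
      funext hderiv]
  have h := laplacian_comp_of_fderiv_eq_smul_isometry (g := fun y ↦ c + L y) (c := 1) (L := L) hf
    (contDiffAt_const.add L.contDiff.contDiffAt) hharm fun v ↦ by simp [hderiv]
  simpa [Function.comp_def] using h

theorem laplacian_comp_const_add_exp {f : ℂ → ℝ} {c z : ℂ}
    (hf : ContDiffAt ℝ 2 f (c + Complex.exp z)) :
    Δ (fun w ↦ f (c + Complex.exp w)) z =
      Real.exp (2 * z.re) * Δ f (c + Complex.exp z) := by
  have hanalytic : AnalyticAt ℂ (fun w ↦ c + Complex.exp w) z := by fun_prop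
  have hderiv (v : ℂ) : fderiv ℝ (fun w ↦ c + Complex.exp w) z v =
      Real.exp z.re • rotation (Circle.exp z.im) v := by
    have h := ((Complex.hasDerivAt_exp z).const_add c).complexToReal_fderiv.fderiv
    have hexp : Complex.exp z = Complex.exp z.re * Complex.exp (z.im * Complex.I) := by
      rw [← Complex.exp_add, Complex.re_add_im]
    rw [h]
    simp [rotation_apply, hexp, mul_assoc]
  have hharm : Δ (fun w ↦ c + Complex.exp w) z = 0 := hanalytic.harmonicAt.2.eq_of_nhds
  have h := laplacian_comp_of_fderiv_eq_smul_isometry (g := fun w ↦ c + Complex.exp w) hf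
    (hanalytic.contDiffAt.restrict_scalars ℝ) hharm hderiv
  rwa [← Real.exp_nat_mul, Nat.cast_two] at h

theorem laplacian_comp_re {h : ℝ → ℝ} {z : ℂ} (hh : ContDiffAt ℝ 2 h z.re) :
    Δ (fun w : ℂ ↦ h w.re) z = deriv (deriv h) z.re := by
  have hf : ContDiffAt ℝ 2 (fun w : ℂ ↦ h w.re) z :=
    ContDiffAt.comp z hh Complex.reCLM.contDiff.contDiffAt
  have hshift (f : ℝ → ℝ) : deriv (fun t ↦ f (z.re + t)) = fun t ↦ deriv f (z.re + t) :=
    funext fun t ↦ deriv_comp_const_add f z.re t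
  simp [laplacian_eq_fderiv_fderiv_complex, ← deriv_deriv_comp_line hf, hshift]

theorem fderiv_one_pos_of_laplacian_neg {f : ℂ → ℝ} {z : ℂ} (hf : ContDiffAt ℝ 2 f z)
    (hzero : ∀ w : ℂ, w.re = z.re → f w = 0) (hnonneg : ∀ᶠ w in 𝓝 z, z.re ≤ w.re → 0 ≤ f w)
    (hΔ : Δ f z < 0) : 0 < fderiv ℝ f z 1 := by
  have hvert : fderiv ℝ (fderiv ℝ f) z Complex.I Complex.I = 0 := by
    simp [← deriv_deriv_comp_line hf, hzero]
  by_contra! hle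
  have hderiv : deriv (fun t : ℝ ↦ f (z + t • (1 : ℂ))) 0 = fderiv ℝ f z 1 :=
    (hf.differentiableAt (by norm_num)).lineDeriv_eq_fderiv
  have hline : Tendsto (fun t : ℝ ↦ z + t • (1 : ℂ)) (𝓝 0) (𝓝 z) :=
    Continuous.tendsto' (by fun_prop) _ _ (by simp)
  rw [laplacian_eq_fderiv_fderiv_complex, hvert, add_zero, ← deriv_deriv_comp_line hf] at hΔ
  obtain ⟨t, ⟨hlt, hge⟩, ht⟩ := ((eventually_lt_right_of_deriv_deriv_neg
    (contDiffAt_comp_line hf 1) (hderiv.trans_le hle) hΔ).and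
      (nhdsWithin_le_nhds (hline.eventually hnonneg)) |>.and self_mem_nhdsWithin).exists
  refine (hge ?_).not_gt (by simpa [hzero z rfl] using hlt)
  simpa using (mem_Ioi.1 ht).le

end Laplacian

section MinimumPrinciple

variable {E : Type*} [NormedAddCommGroup E] [InnerProductSpace ℝ E] [FiniteDimensional ℝ E]
  {Ω : Set E} {u : E → ℝ}

theorem laplacian_const_sub_norm_sq (c : ℝ) (x : E) :
    Δ (fun y : E ↦ c - ‖y‖ ^ 2) x = -(2 * Module.finrank ℝ E) := by
  let B : E →L[ℝ] E →L[ℝ] ℝ := -(2 : ℝ) • innerSL ℝ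
  have hB (v w : E) : B v w = -(2 * inner ℝ v w) := neg_mul (2 : ℝ) _
  have hderiv : fderiv ℝ (fun y : E ↦ c - ‖y‖ ^ 2) = B := by
    ext y v
    simp [fderiv_const_sub, fderiv_norm_sq_apply, hB]
  rw [laplacian_eq_sum_fderiv_fderiv (stdOrthonormalBasis ℝ E), hderiv, ContinuousLinearMap.fderiv]
  simp [hB, mul_comm]

theorem nonneg_of_laplacian_neg (hΩ : IsOpen Ω) (hbdd : Bornology.IsBounded Ω)
    (hcont : ContinuousOn u (closure Ω)) (hu : ContDiffOn ℝ 2 u Ω) (hΔ : ∀ x ∈ Ω, Δ u x < 0)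
    (hfrontier : ∀ x ∈ frontier Ω, 0 ≤ u x) : ∀ x ∈ closure Ω, 0 ≤ u x := by
  intro x hx
  obtain ⟨p, hp, hmin⟩ := hbdd.isCompact_closure.exists_isMinOn ⟨x, hx⟩ hcont
  have hpΩ : p ∉ Ω := fun hpΩ ↦ (hΔ p hpΩ).not_ge <|
    laplacian_nonneg_of_isLocalMin
      (hmin.isLocalMin (Filter.mem_of_superset (hΩ.mem_nhds hpΩ) subset_closure))
      (hu.contDiffAt (hΩ.mem_nhds hpΩ))
  exact (hfrontier p (hΩ.frontier_eq ▸ ⟨hp, hpΩ⟩)).trans (hmin hx)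

theorem nonneg_of_laplacian_nonpos [Nontrivial E] (hΩ : IsOpen Ω) (hbdd : Bornology.IsBounded Ω)
    (hcont : ContinuousOn u (closure Ω)) (hu : ContDiffOn ℝ 2 u Ω) (hΔ : ∀ x ∈ Ω, Δ u x ≤ 0)
    (hfrontier : ∀ x ∈ frontier Ω, 0 ≤ u x) : ∀ x ∈ closure Ω, 0 ≤ u x := by
  intro x hx
  obtain ⟨R, hR⟩ := hbdd.closure.exists_norm_le
  set q : E → ℝ := fun y ↦ R ^ 2 - ‖y‖ ^ 2
  have hq : ContDiff ℝ 2 q := contDiff_const.sub (contDiff_norm_sq ℝ)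
  have hqnonneg : ∀ y ∈ closure Ω, 0 ≤ q y := fun y hy ↦
    sub_nonneg.2 (pow_le_pow_left₀ (norm_nonneg y) (hR y hy) 2)
  have hfinrank : (0 : ℝ) < Module.finrank ℝ E := by exact_mod_cast Module.finrank_pos
  have hperturb : ∀ ε > (0 : ℝ), 0 ≤ u x + ε * q x := fun ε hε ↦ by
    have hεq : ContDiff ℝ 2 (ε • q) := hq.const_smul ε
    refine nonneg_of_laplacian_neg (u := u + ε • q) hΩ hbdd (hcont.add hεq.continuous.continuousOn)
      (hu.add hεq.contDiffOn) (fun y hy ↦ ?_) (fun y hy ↦ add_nonneg (hfrontier y hy)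
        (mul_nonneg hε.le (hqnonneg y (frontier_subset_closure hy)))) x hx
    rw [(hu.contDiffAt (hΩ.mem_nhds hy)).laplacian_add hεq.contDiffAt,
      laplacian_smul ε hq.contDiffAt, laplacian_const_sub_norm_sq, smul_eq_mul]
    have := mul_pos hε hfinrank
    linarith [hΔ y hy]
  have hlim : Tendsto (fun ε ↦ u x + ε * q x) (𝓝[>] 0) (𝓝 (u x)) :=
    (Continuous.tendsto' (by fun_prop) _ _ (by simp)).mono_left nhdsWithin_le_nhds
  exact ge_of_tendsto hlim (eventually_mem_nhdsWithin.mono hperturb)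

end MinimumPrinciple

section MovingPlane

variable {G : ℝ → ℂ → ℝ} {l l₁ T : ℝ}

theorem fderiv_uncurry_apply_zero {z : ℂ} (hG : ContDiffAt ℝ 2 (Function.uncurry G) (l, z))
    (v : ℂ) : fderiv ℝ (Function.uncurry G) (l, z) (0, v) = fderiv ℝ (G l) z v := by
  have h := (hG.differentiableAt (by norm_num)).hasFDerivAt.comp z
    ((hasFDerivAt_const l z).prodMk (hasFDerivAt_id z))
  simp [show G l = Function.uncurry G ∘ fun w ↦ (l, w) from rfl, HasFDerivAt.fderiv h]

theorem eventually_nonneg_of_fderiv_one_pos {z : ℂ}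
    (hG : ContDiffAt ℝ 2 (Function.uncurry G) (l, z)) (hz : z.re = l)
    (hzero : ∀ l, ∀ w : ℂ, w.re = l → G l w = 0) (hpos : 0 < fderiv ℝ (G l) z 1) :
    ∀ᶠ p in 𝓝 (l, z), p.1 ≤ p.2.re → 0 ≤ G p.1 p.2 := by
  have hcont : ContinuousAt (fun p ↦ fderiv ℝ (Function.uncurry G) p (0, 1)) (l, z) :=
    (hG.fderiv_right (m := 1) (by norm_num)).continuousAt.clm_apply continuousAt_const
  have hpos' : ∀ᶠ p in 𝓝 (l, z), 0 < fderiv ℝ (Function.uncurry G) p (0, 1) :=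
    hcont.eventually (lt_mem_nhds (by simpa only [fderiv_uncurry_apply_zero hG] using hpos))
  obtain ⟨ε, hε, hball⟩ := Metric.eventually_nhds_iff_ball.1
    ((hG.eventually (by simp)).and hpos')
  have hproj : Tendsto (fun p : ℝ × ℂ ↦ (p.1, p.1 + p.2.im * Complex.I)) (𝓝 (l, z)) (𝓝 (l, z)) :=
    Continuous.tendsto' (by fun_prop) _ _ (by simp [← hz])
  filter_upwards [ball_mem_nhds (l, z) hε, hproj (ball_mem_nhds (l, z) hε)] with p hp hproj hre
  obtain ⟨q, hq, hmvt⟩ := domain_mvt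
    (fun q hq ↦ ((hball q hq).1.differentiableAt (by norm_num)).hasFDerivAt.hasFDerivWithinAt)
    (convex_ball (l, z) ε) hproj hp
  have hdiff : p - (p.1, p.1 + p.2.im * Complex.I) = (p.2.re - p.1) • ((0 : ℝ), (1 : ℂ)) := by
    refine Prod.ext (by simp) (Complex.ext ?_ ?_) <;> simp
  rw [hdiff, map_smul, smul_eq_mul] at hmvt
  have hnonneg := mul_nonneg (sub_nonneg.2 hre)
    (hball q ((convex_ball _ ε).segment_subset hproj hp hq)).2.le
  have hbase : G p.1 (p.1 + p.2.im * Complex.I) = 0 := hzero _ _ (by simp)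
  simp only [Function.uncurry, hbase, sub_zero] at hmvt
  exact hmvt ▸ hnonneg

/-- A family of comparison functions `G l` on the strips `l ≤ re z ≤ T`, `2πi`-periodic and
vanishing on the axes `re z = l`, to which the method of moving planes applies for `l ≤ l₁`. -/
structure IsMovingPlaneFamily (G : ℝ → ℂ → ℝ) (l₁ T : ℝ) : Prop where
  contDiffAt : ∀ l ≤ l₁, ∀ z : ℂ, l ≤ z.re → z.re ≤ T → ContDiffAt ℝ 2 (Function.uncurry G) (l, z)
  periodic : ∀ l, Function.Periodic (G l) (2 * Real.pi * Complex.I)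
  eq_zero : ∀ l, ∀ z : ℂ, z.re = l → G l z = 0
  pos_right : ∀ l ≤ l₁, ∀ z : ℂ, z.re = T → 0 < G l z
  laplacian_neg : ∀ l ≤ l₁, ∀ z : ℂ, l ≤ z.re → z.re < T → G l z = 0 → Δ (G l) z < 0

namespace IsMovingPlaneFamily

theorem contDiffAt_slice (hG : IsMovingPlaneFamily G l₁ T) (hl : l ≤ l₁) {z : ℂ} (hlz : l ≤ z.re)
    (hzT : z.re ≤ T) : ContDiffAt ℝ 2 (G l) z :=
  (hG.contDiffAt l hl z hlz hzT).comp z (contDiffAt_const.prodMk contDiffAt_id)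

theorem eventually_nonneg (hG : IsMovingPlaneFamily G l₁ T) (hl : l ≤ l₁)
    (hnonneg : ∀ z : ℂ, l ≤ z.re → z.re ≤ T → 0 ≤ G l z) {z : ℂ} (hlz : l ≤ z.re)
    (hzT : z.re ≤ T) : ∀ᶠ p in 𝓝 (l, z), p.1 ≤ p.2.re → 0 ≤ G p.1 p.2 := by
  have hcd := hG.contDiffAt l hl z hlz hzT
  rcases (hnonneg z hlz hzT).lt_or_eq with hpos | hzero
  · exact (hcd.continuousAt.eventually (lt_mem_nhds hpos)).mono fun p hp _ ↦ hp.le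
  have hzT' : z.re < T := hzT.lt_of_ne fun h ↦ (hG.pos_right l hl z h).ne hzero
  have hΔ := hG.laplacian_neg l hl z hlz hzT' hzero.symm
  have hlt : ∀ᶠ w : ℂ in 𝓝 z, w.re < T :=
    Complex.continuous_re.continuousAt.eventually (gt_mem_nhds hzT')
  have hslice := hG.contDiffAt_slice hl hlz hzT
  rcases hlz.lt_or_eq with hlt' | heq
  · have hmin : IsLocalMin (G l) z := by
      filter_upwards [hlt, Complex.continuous_re.continuousAt.eventually (lt_mem_nhds hlt')]
        with w hwT hlw
      exact hzero ▸ hnonneg w hlw.le hwT.le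
    exact absurd (laplacian_nonneg_of_isLocalMin hmin hslice) hΔ.not_ge
  · refine eventually_nonneg_of_fderiv_one_pos hcd heq.symm hG.eq_zero
      (fderiv_one_pos_of_laplacian_neg hslice (fun w hw ↦ hG.eq_zero l w (hw.trans heq.symm)) ?_ hΔ)
    filter_upwards [hlt] with w hwT hzw
    exact hnonneg w (hlz.trans hzw) hwT.le

theorem eventually_forall_nonneg (hG : IsMovingPlaneFamily G l₁ T) (hl : l ≤ l₁)
    (hnonneg : ∀ z : ℂ, l ≤ z.re → z.re ≤ T → 0 ≤ G l z) :
    ∀ᶠ l' in 𝓝[>] l, ∀ z : ℂ, l' ≤ z.re → z.re ≤ T → 0 ≤ G l' z := by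
  set K : Set ℂ := Icc l T ×ℂ Icc 0 (2 * Real.pi)
  have hK : IsCompact K := isCompact_Icc.reProdIm isCompact_Icc
  have hlocal : ∀ᶠ l' in 𝓝 l, ∀ z ∈ K, l' ≤ z.re → 0 ≤ G l' z :=
    hK.eventually_forall_of_forall_eventually fun z hz ↦
      hG.eventually_nonneg hl hnonneg hz.1.1 hz.1.2
  filter_upwards [nhdsWithin_le_nhds hlocal, self_mem_nhdsWithin]
    with l' hl' (hlt : l < l') z hlz hzT
  obtain ⟨n, hn, -⟩ := existsUnique_sub_zsmul_mem_Ico Real.two_pi_pos z.im 0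
  rw [← (hG.periodic l').sub_zsmul_eq n]
  have hre : (z - n • (2 * Real.pi * Complex.I)).re = z.re := by simp
  have him : (z - n • (2 * Real.pi * Complex.I)).im ∈ Icc 0 (2 * Real.pi) := by
    rw [show (z - n • (2 * Real.pi * Complex.I)).im = z.im - n • (2 * Real.pi) by simp]
    exact ⟨hn.1, by simpa only [zero_add] using hn.2.le⟩
  refine hl' _ ⟨?_, him⟩ (by rwa [hre])
  rw [mem_preimage, hre]
  exact ⟨hlt.le.trans hlz, hzT⟩

theorem isClosed_setOf_nonneg (hG : IsMovingPlaneFamily G l₁ T) (l₀ : ℝ) :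
    IsClosed ({l | ∀ z : ℂ, l ≤ z.re → z.re ≤ T → 0 ≤ G l z} ∩ Icc l₀ l₁) := by
  refine isClosed_iff_frequently.2 fun l hfreq ↦ ?_
  have hmem : l ∈ Icc l₀ l₁ :=
    isClosed_iff_frequently.1 isClosed_Icc l (hfreq.mono fun _ h ↦ h.2)
  refine ⟨fun z hlz hzT ↦ ?_, hmem⟩
  rcases hlz.lt_or_eq with hlt | heq
  · have hcont : ContinuousAt (fun l' ↦ G l' z) l :=
      (hG.contDiffAt l hmem.2 z hlz hzT).continuousAt.comp (f := fun l' ↦ (l', z)) (by fun_prop)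
    by_contra! hneg
    obtain ⟨l', ⟨hnonneg, -⟩, hlt', hneg'⟩ := (hfreq.and_eventually
      ((gt_mem_nhds hlt).and (hcont.eventually (gt_mem_nhds hneg)))).exists
    exact hneg'.not_ge (hnonneg z hlt'.le hzT)
  · exact (hG.eq_zero l z heq.symm).ge

theorem nonneg (hG : IsMovingPlaneFamily G l₁ T)
    (hstart : ∃ l₀, ∀ l ≤ l₀, ∀ z : ℂ, l ≤ z.re → z.re ≤ T → 0 ≤ G l z) :
    ∀ l ≤ l₁, ∀ z : ℂ, l ≤ z.re → z.re ≤ T → 0 ≤ G l z := by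
  obtain ⟨l₀, hl₀⟩ := hstart
  intro l hl
  rcases le_total l l₀ with hle | hge
  · exact hl₀ l hle
  · exact (hG.isClosed_setOf_nonneg l₀).Icc_subset_of_forall_mem_nhdsWithin (hl₀ l₀ le_rfl)
      (fun l' hl' ↦ hG.eventually_forall_nonneg hl'.2.2.le hl'.1) ⟨hge, hl⟩

end IsMovingPlaneFamily

end MovingPlane

section Barrier

/-- The barrier `τ ↦ η (1 - e^{-τ} - τ)` absorbing the Hölder error in the moving plane comparison:
it has a double zero at `τ = 0`, and its second derivative is `-η e^{-τ} < 0`. -/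
noncomputable def barrier (η τ : ℝ) : ℝ :=
  η * (1 - Real.exp (-τ) - τ)

variable {η τ : ℝ}

theorem barrier_zero (η : ℝ) : barrier η 0 = 0 := by
  simp [barrier]

theorem barrier_nonpos (hη : 0 ≤ η) : barrier η τ ≤ 0 :=
  mul_nonpos_of_nonneg_of_nonpos hη (by linarith [Real.add_one_le_exp (-τ)])

theorem neg_mul_le_barrier (hη : 0 ≤ η) (hτ : 0 ≤ τ) : -(η * τ) ≤ barrier η τ := by
  have : 0 ≤ η * (1 - Real.exp (-τ)) :=
    mul_nonneg hη (sub_nonneg.2 (Real.exp_le_one_iff.2 (neg_nonpos.2 hτ)))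
  rw [barrier]
  linarith

theorem contDiff_barrier {n : WithTop ℕ∞} : ContDiff ℝ n (barrier η) := by
  unfold barrier
  fun_prop

theorem hasDerivAt_barrier (η τ : ℝ) : HasDerivAt (barrier η) (η * (Real.exp (-τ) - 1)) τ := by
  have h : HasDerivAt (fun τ : ℝ ↦ 1 - Real.exp (-τ) - τ) (Real.exp (-τ) - 1) τ := by
    simpa using ((hasDerivAt_neg τ).exp.const_sub 1).fun_sub (hasDerivAt_id' τ)
  exact h.const_mul η

theorem deriv_deriv_barrier (η τ : ℝ) : deriv (deriv (barrier η)) τ = -(η * Real.exp (-τ)) := by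
  have h : HasDerivAt (fun τ : ℝ ↦ η * (Real.exp (-τ) - 1)) (-(η * Real.exp (-τ))) τ := by
    simpa using ((hasDerivAt_neg τ).exp.sub_const 1).const_mul η
  rw [show deriv (barrier η) = _ from funext fun τ ↦ (hasDerivAt_barrier η τ).deriv, h.deriv]

theorem laplacian_barrier_re_sub (η l : ℝ) (z : ℂ) :
    Δ (fun w : ℂ ↦ barrier η (w.re - l)) z = -(η * Real.exp (-(z.re - l))) := by
  have hshift (f : ℝ → ℝ) : deriv (fun t ↦ f (t - l)) = fun t ↦ deriv f (t - l) :=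
    funext fun t ↦ deriv_comp_sub_const f l t
  rw [laplacian_comp_re (h := fun t ↦ barrier η (t - l))
    (contDiff_barrier.comp (contDiff_id.sub contDiff_const)).contDiffAt, hshift, hshift]
  exact deriv_deriv_barrier η (z.re - l)

end Barrier

section Reflection

/-- The reflection of `ℂ` across the vertical axis `re z = l`. -/
noncomputable def reflectRe (l : ℝ) (z : ℂ) : ℂ :=
  2 * l - conj z

theorem reflectRe_re (l : ℝ) (z : ℂ) : (reflectRe l z).re = 2 * l - z.re := by
  simp [reflectRe]

theorem reflectRe_re_lt {l τ : ℝ} {z : ℂ} (hlz : l ≤ z.re) (hz : z.re < τ) :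
    (reflectRe l z).re < τ := by
  rw [reflectRe_re]
  linarith

theorem reflectRe_add_ofReal (z : ℂ) (t : ℝ) : reflectRe z.re (z + t) = z - t := by
  apply Complex.ext <;> simp [reflectRe]
  ring

theorem laplacian_comp_reflectRe {f : ℂ → ℝ} {l : ℝ} {z : ℂ}
    (hf : ContDiffAt ℝ 2 f (reflectRe l z)) :
    Δ (fun w ↦ f (reflectRe l w)) z = Δ f (reflectRe l z) := by
  have hrefl (w : ℂ) : reflectRe l w =
      2 * l + (Complex.conjLIE.trans (LinearIsometryEquiv.neg ℝ)) w := by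
    simp [reflectRe, sub_eq_add_neg]
  simp only [hrefl] at hf ⊢
  exact laplacian_comp_const_add_isometry _ _ hf

end Reflection

section Cylinder

/-- A solution `φ` of `-Δφ = W e^φ` on the half-cylinder `{re z < τ} / 2πiℤ`, encoded as a
`2πi`-periodic function; this is what the Liouville equation becomes in log-polar coordinates. -/
structure IsCylinderSolution (φ W : ℂ → ℝ) (τ : ℝ) : Prop where
  contDiffAt : ∀ z : ℂ, z.re < τ → ContDiffAt ℝ 2 φ z
  periodic : Function.Periodic φ (2 * Real.pi * Complex.I)
  laplacian_eq : ∀ z : ℂ, z.re < τ → Δ φ z = -(W z * Real.exp (φ z))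

/-- The moving plane comparison of `φ` with its reflection across `re z = l`, corrected by the
barrier of size `η`. -/
noncomputable def reflectionGap (φ : ℂ → ℝ) (η l : ℝ) (z : ℂ) : ℝ :=
  φ z - φ (reflectRe l z) + barrier η (z.re - l)

variable {φ W : ℂ → ℝ} {τ η l m M : ℝ} {z : ℂ}

theorem reflectionGap_eq_zero (φ : ℂ → ℝ) (η : ℝ) (hz : z.re = l) :
    reflectionGap φ η l z = 0 := by
  have hfix : reflectRe l z = z := by
    simpa [hz] using reflectRe_add_ofReal z 0
  simp [reflectionGap, hfix, hz, barrier_zero]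

theorem le_reflectionGap (hη : 0 ≤ η) (hlz : l ≤ z.re) (hm : m + 2 * z.re ≤ φ z)
    (hM : φ (reflectRe l z) ≤ M + 2 * (2 * l - z.re)) :
    m - M + (4 - η) * (z.re - l) ≤ reflectionGap φ η l z := by
  have := neg_mul_le_barrier hη (sub_nonneg.2 hlz)
  rw [reflectionGap]
  linarith

namespace IsCylinderSolution

theorem contDiffAt_uncurry_reflectionGap (hφ : IsCylinderSolution φ W τ) (hlz : l ≤ z.re)
    (hz : z.re < τ) : ContDiffAt ℝ 2 (Function.uncurry (reflectionGap φ η)) (l, z) := by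
  have hrefl : ContDiff ℝ 2 fun p : ℝ × ℂ ↦ reflectRe p.1 p.2 := by
    unfold reflectRe
    exact (contDiff_const.mul (Complex.ofRealCLM.contDiff.comp contDiff_fst)).sub
      (Complex.conjCLE.contDiff.comp contDiff_snd)
  have hsub : ContDiff ℝ 2 fun p : ℝ × ℂ ↦ p.2.re - p.1 :=
    (Complex.reCLM.contDiff.comp contDiff_snd).sub contDiff_fst
  exact (((hφ.contDiffAt z hz).comp (l, z) contDiffAt_snd).sub
    ((hφ.contDiffAt _ (reflectRe_re_lt hlz hz)).comp (l, z) hrefl.contDiffAt)).add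
      (contDiff_barrier.comp hsub).contDiffAt

theorem laplacian_reflectionGap (hφ : IsCylinderSolution φ W τ) (hlz : l ≤ z.re)
    (hz : z.re < τ) :
    Δ (reflectionGap φ η l) z = W (reflectRe l z) * Real.exp (φ (reflectRe l z)) -
      W z * Real.exp (φ z) - η * Real.exp (-(z.re - l)) := by
  have hz' := reflectRe_re_lt hlz hz
  have hφz := hφ.contDiffAt z hz
  have hφz' : ContDiffAt ℝ 2 (fun w ↦ φ (reflectRe l w)) z := by
    refine (hφ.contDiffAt _ hz').comp z (f := reflectRe l) ?_
    exact contDiffAt_const.sub Complex.conjCLE.contDiff.contDiffAt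
  have hbarrier : ContDiffAt ℝ 2 (fun w : ℂ ↦ barrier η (w.re - l)) z :=
    (contDiff_barrier.comp (Complex.reCLM.contDiff.sub contDiff_const)).contDiffAt
  have hsub : ContDiffAt ℝ 2 (φ - fun w ↦ φ (reflectRe l w)) z := hφz.sub hφz'
  have hsum := hsub.laplacian_add hbarrier
  rw [hφz.laplacian_sub hφz', laplacian_comp_reflectRe (hφ.contDiffAt _ hz'),
    laplacian_barrier_re_sub, hφ.laplacian_eq z hz, hφ.laplacian_eq _ hz'] at hsum
  refine hsum.trans ?_
  ring

end IsCylinderSolution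

end Cylinder

section Monotonicity

variable {φ W : ℂ → ℝ} {τ T η l l₁ m M A s : ℝ}

theorem periodic_reflectionGap (hφ : Function.Periodic φ (2 * Real.pi * Complex.I)) :
    Function.Periodic (reflectionGap φ η l) (2 * Real.pi * Complex.I) := fun z ↦ by
  have hrefl : reflectRe l (z + 2 * Real.pi * Complex.I) =
      reflectRe l z + 2 * Real.pi * Complex.I := by
    apply Complex.ext <;> simp [reflectRe, add_comm]
  simp [reflectionGap, hrefl, hφ z, hφ (reflectRe l z)]

theorem exists_forall_le_reflectionGap_nonneg (hdiff : ∀ z : ℂ, z.re ≤ T → DifferentiableAt ℝ φ z)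
    (hm : ∀ z : ℂ, z.re ≤ T → m + 2 * z.re ≤ φ z) (hM : ∀ z : ℂ, z.re ≤ T → φ z ≤ M + 2 * z.re)
    (hlim : ∀ᶠ z in comap Complex.re atBot, 1 ≤ fderiv ℝ φ z 1) (hη : 0 ≤ η) (hη2 : η ≤ 2) :
    ∃ l₀, ∀ l ≤ l₀, ∀ z : ℂ, l ≤ z.re → z.re ≤ T → 0 ≤ reflectionGap φ η l z := by
  obtain ⟨t₀, ht₀⟩ := eventually_atBot.1 (eventually_comap.1 hlim)
  refine ⟨t₀ - (M - m) / 2, fun l hl z hlz hzT ↦ ?_⟩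
  have hrefl : (reflectRe l z).re = 2 * l - z.re := reflectRe_re l z
  rcases le_total z.re t₀ with hz | hz
  · have hline (t : ℝ) : (z + t • (1 : ℂ)).re = z.re + t := by simp
    have hmvt := (convex_Iic (0 : ℝ)).mul_sub_le_image_sub_of_le_deriv
      (f := fun t : ℝ ↦ φ (z + t • (1 : ℂ))) (C := 1)
      (fun t (ht : t ≤ 0) ↦ (hasDerivAt_comp_line (hdiff _ (by
        rw [hline]; linarith))).continuousAt.continuousWithinAt)
      (fun t ht ↦ (hasDerivAt_comp_line (hdiff _ (by
        rw [hline]; linarith [interior_subset (s := Iic (0 : ℝ)) ht |>.out]))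
          ).differentiableAt.differentiableWithinAt)
      (fun t ht ↦ by
        have ht' : t ≤ 0 := interior_subset (s := Iic (0 : ℝ)) ht
        rw [(hasDerivAt_comp_line (hdiff _ (by rw [hline]; linarith))).deriv]
        exact ht₀ _ (by linarith) _ (hline t))
      (2 * (l - z.re)) (mem_Iic.2 (by linarith)) 0 (mem_Iic.2 le_rfl) (by linarith)
    have hpoint : z + (2 * (l - z.re)) • (1 : ℂ) = reflectRe l z := by
      apply Complex.ext <;> simp [reflectRe]
      ring
    simp only [hpoint, zero_smul, add_zero] at hmvt
    have hbarrier := neg_mul_le_barrier hη (sub_nonneg.2 hlz)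
    have := mul_le_mul_of_nonneg_right hη2 (sub_nonneg.2 hlz)
    rw [reflectionGap]
    linarith
  · have hgap := le_reflectionGap hη hlz (hm z hzT)
      ((hM _ (by rw [hrefl]; linarith)).trans_eq (by rw [hrefl]))
    have := mul_le_mul_of_nonneg_right hη2 (sub_nonneg.2 hlz)
    linarith

theorem fderiv_one_nonneg_of_reflectionGap_nonneg {z : ℂ} (hdiff : DifferentiableAt ℝ φ z)
    (hzT : z.re < T) (hgap : ∀ w : ℂ, z.re ≤ w.re → w.re ≤ T → 0 ≤ reflectionGap φ η z.re w) :
    0 ≤ fderiv ℝ φ z 1 := by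
  have hline (v : ℂ) : HasDerivAt (fun t : ℝ ↦ φ (z + t • v)) (fderiv ℝ φ z v) 0 := by
    have := hasDerivAt_comp_line (f := φ) (x := z) (v := v) (t := 0) (by simpa using hdiff)
    simpa only [zero_smul, add_zero] using this
  have hderiv : HasDerivAt (fun t : ℝ ↦ φ (z + t • (1 : ℂ)) - φ (z + t • (-1 : ℂ)) + barrier η t)
      (2 * fderiv ℝ φ z 1) 0 := by
    refine (((hline 1).fun_sub (hline (-1))).fun_add (hasDerivAt_barrier η 0)).congr_deriv ?_
    simp
    ring
  have hvalue (t : ℝ) : φ (z + t • (1 : ℂ)) - φ (z + t • (-1 : ℂ)) + barrier η t =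
      reflectionGap φ η z.re (z + t) := by
    simp [reflectionGap, reflectRe_add_ofReal, sub_eq_add_neg]
  have hslope := hderiv.tendsto_slope_zero_right
  refine nonneg_of_mul_nonneg_right (ge_of_tendsto hslope ?_) two_pos
  filter_upwards [Ioo_mem_nhdsGT (sub_pos.2 hzT)] with t ht
  have hzero := reflectionGap_eq_zero φ η (z := z + (0 : ℝ)) (l := z.re) (by simp)
  rw [zero_add, hvalue, hvalue, hzero, sub_zero]
  exact smul_nonneg (inv_nonneg.2 ht.1.le)
    (hgap _ (by simpa using ht.1.le) (by simpa using (lt_sub_iff_add_lt'.1 ht.2).le))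

namespace IsCylinderSolution

theorem laplacian_reflectionGap_neg (hφ : IsCylinderSolution φ W τ) (hT : T < τ)
    (hM : ∀ z : ℂ, z.re ≤ T → φ z ≤ M + 2 * z.re) (hW : ∀ z : ℂ, z.re ≤ T → 0 ≤ W z)
    (hWA : ∀ l, ∀ z : ℂ, l ≤ z.re → z.re ≤ T →
      |W (reflectRe l z) - W z| ≤ A * Real.exp (s * z.re))
    (hs₀ : 0 ≤ s) (hs₁ : s ≤ 1) (hη : A * Real.exp (M + (2 + s) * l₁) < η) (hl : l ≤ l₁) {z : ℂ}
    (hlz : l ≤ z.re) (hzT : z.re ≤ T) (hzero : reflectionGap φ η l z = 0) :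
    Δ (reflectionGap φ η l) z < 0 := by
  set z' := reflectRe l z
  have hrefl : z'.re = 2 * l - z.re := reflectRe_re l z
  have hA : 0 ≤ A :=
    nonneg_of_mul_nonneg_left ((abs_nonneg _).trans (hWA l z hlz hzT)) (Real.exp_pos _)
  have hη₀ : 0 < η := (mul_nonneg hA (Real.exp_pos _).le).trans_lt hη
  have hle : φ z' ≤ φ z := by
    have := barrier_nonpos (τ := z.re - l) hη₀.le
    rw [reflectionGap] at hzero
    linarith
  have hexp : s * z.re + (M + 2 * z'.re) ≤ M + (2 + s) * l₁ + -(z.re - l) := by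
    rw [hrefl]
    nlinarith
  rw [hφ.laplacian_reflectionGap hlz (hzT.trans_lt hT)]
  calc W z' * Real.exp (φ z') - W z * Real.exp (φ z) - η * Real.exp (-(z.re - l))
      ≤ W z' * Real.exp (φ z') - W z * Real.exp (φ z') - η * Real.exp (-(z.re - l)) := by
        gcongr
        exact hW z hzT
    _ = (W z' - W z) * Real.exp (φ z') - η * Real.exp (-(z.re - l)) := by ring
    _ ≤ A * Real.exp (s * z.re) * Real.exp (M + 2 * z'.re) - η * Real.exp (-(z.re - l)) := by
        gcongr
        · exact (le_abs_self _).trans (hWA l z hlz hzT)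
        · exact hM z' (by rw [hrefl]; linarith)
    _ = A * Real.exp (s * z.re + (M + 2 * z'.re)) - η * Real.exp (-(z.re - l)) := by
        rw [Real.exp_add (s * z.re), mul_assoc]
    _ ≤ A * Real.exp (M + (2 + s) * l₁ + -(z.re - l)) - η * Real.exp (-(z.re - l)) := by gcongr
    _ = (A * Real.exp (M + (2 + s) * l₁) - η) * Real.exp (-(z.re - l)) := by
        rw [Real.exp_add]
        ring
    _ < 0 := mul_neg_of_neg_of_pos (sub_neg.2 hη) (Real.exp_pos _)

theorem fderiv_one_nonneg (hφ : IsCylinderSolution φ W τ) (hT : T < τ)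
    (hm : ∀ z : ℂ, z.re ≤ T → m + 2 * z.re ≤ φ z) (hM : ∀ z : ℂ, z.re ≤ T → φ z ≤ M + 2 * z.re)
    (hlim : ∀ᶠ z in comap Complex.re atBot, 1 ≤ fderiv ℝ φ z 1)
    (hW : ∀ z : ℂ, z.re ≤ T → 0 ≤ W z)
    (hWA : ∀ l, ∀ z : ℂ, l ≤ z.re → z.re ≤ T →
      |W (reflectRe l z) - W z| ≤ A * Real.exp (s * z.re))
    (hs₀ : 0 ≤ s) (hs₁ : s ≤ 1) (hη₀ : 0 ≤ η) (hη₂ : η ≤ 2)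
    (hηA : A * Real.exp (M + (2 + s) * l₁) < η)
    (hgap : M - m < (4 - η) * (T - l₁)) {z : ℂ} (hz : z.re ≤ l₁) : 0 ≤ fderiv ℝ φ z 1 := by
  have hl₁ : l₁ < T := by
    have hmM := (hm T le_rfl).trans (hM T le_rfl)
    refine sub_pos.1 (pos_of_mul_pos_right (a := 4 - η) ?_ (by linarith))
    linarith
  have hfamily : IsMovingPlaneFamily (reflectionGap φ η) l₁ T :=
    { contDiffAt := fun l _ w hlw hwT ↦ hφ.contDiffAt_uncurry_reflectionGap hlw (hwT.trans_lt hT)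
      periodic := fun l ↦ periodic_reflectionGap hφ.periodic
      eq_zero := fun l w hw ↦ reflectionGap_eq_zero φ η hw
      pos_right := fun l hl w hw ↦ by
        have hrefl : (reflectRe l w).re = 2 * l - w.re := reflectRe_re l w
        have hle := le_reflectionGap hη₀ (hw ▸ hl.trans hl₁.le) (hm w hw.le)
          ((hM _ (by rw [hrefl]; linarith)).trans_eq (by rw [hrefl]))
        have := mul_nonneg (sub_nonneg.2 hη₂) (sub_nonneg.2 hl)
        rw [hw] at hle
        linarith
      laplacian_neg := fun l hl w hlw hwT ↦
        hφ.laplacian_reflectionGap_neg hT hM hW hWA hs₀ hs₁ hηA hl hlw hwT.le }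
  have hdiff : ∀ w : ℂ, w.re ≤ T → DifferentiableAt ℝ φ w := fun w hw ↦
    (hφ.contDiffAt w (hw.trans_lt hT)).differentiableAt (by norm_num)
  exact fderiv_one_nonneg_of_reflectionGap_nonneg (hdiff z (hz.trans hl₁.le)) (hz.trans_lt hl₁)
    (hfamily.nonneg (exists_forall_le_reflectionGap_nonneg hdiff hm hM hlim hη₀ hη₂) z.re hz)

end IsCylinderSolution

end Monotonicity

section VerticalMean

/-- The mean of `f` over one period `[t, t + 2πi]` of the vertical line `re z = t`; in log-polar
coordinates this is the mean over the circle of radius `e^t`. -/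
noncomputable def verticalMean (f : ℂ → ℝ) (t : ℝ) : ℝ :=
  (2 * Real.pi)⁻¹ * ∫ θ in (0)..(2 * Real.pi), f (t + θ * Complex.I)

variable {f g : ℂ → ℝ} {t τ c : ℝ}

theorem continuous_comp_vertical (hf : ∀ z : ℂ, z.re < τ → ContinuousAt f z) (ht : t < τ) :
    Continuous fun θ : ℝ ↦ f (t + θ * Complex.I) := by
  refine continuous_iff_continuousAt.2 fun θ ↦ ?_
  exact (hf _ (by simpa using ht)).comp (f := fun θ : ℝ ↦ (t + θ * Complex.I : ℂ))
    (by fun_prop)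

theorem verticalMean_mono (hf : Continuous fun θ : ℝ ↦ f (t + θ * Complex.I))
    (hg : Continuous fun θ : ℝ ↦ g (t + θ * Complex.I)) (hfg : ∀ z : ℂ, z.re = t → f z ≤ g z) :
    verticalMean f t ≤ verticalMean g t :=
  mul_le_mul_of_nonneg_left (intervalIntegral.integral_mono_on Real.two_pi_pos.le
    (hf.intervalIntegrable _ _) (hg.intervalIntegrable _ _) fun θ _ ↦ hfg _ (by simp))
    (inv_nonneg.2 Real.two_pi_pos.le)

theorem verticalMean_const (c t : ℝ) : verticalMean (fun _ ↦ c) t = c := by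
  rw [verticalMean, intervalIntegral.integral_const, sub_zero, smul_eq_mul,
    inv_mul_cancel_left₀ Real.two_pi_pos.ne']

theorem verticalMean_add (hf : Continuous fun θ : ℝ ↦ f (t + θ * Complex.I))
    (hg : Continuous fun θ : ℝ ↦ g (t + θ * Complex.I)) :
    verticalMean (fun z ↦ f z + g z) t = verticalMean f t + verticalMean g t := by
  rw [verticalMean, intervalIntegral.integral_add (hf.intervalIntegrable _ _)
    (hg.intervalIntegrable _ _), mul_add]
  rfl

theorem verticalMean_const_mul (c : ℝ) (f : ℂ → ℝ) (t : ℝ) :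
    verticalMean (fun z ↦ c * f z) t = c * verticalMean f t := by
  rw [verticalMean, intervalIntegral.integral_const_mul, mul_left_comm]
  rfl

theorem verticalMean_le (hf : Continuous fun θ : ℝ ↦ f (t + θ * Complex.I))
    (h : ∀ z : ℂ, z.re = t → f z ≤ c) : verticalMean f t ≤ c :=
  (verticalMean_mono hf continuous_const h).trans_eq (verticalMean_const c t)

theorem le_verticalMean (hf : Continuous fun θ : ℝ ↦ f (t + θ * Complex.I))
    (h : ∀ z : ℂ, z.re = t → c ≤ f z) : c ≤ verticalMean f t :=
  (verticalMean_const c t).symm.trans_le (verticalMean_mono continuous_const hf h)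

theorem tendsto_verticalMean_sub_mul (hf : ∀ z : ℂ, z.re < τ → ContinuousAt f z) {k l : ℝ}
    (hlim : Tendsto (fun z ↦ f z - k * z.re) (comap Complex.re atBot) (𝓝 l)) :
    Tendsto (fun t ↦ verticalMean f t - k * t) atBot (𝓝 l) := by
  refine Metric.nhds_basis_closedBall.tendsto_right_iff.2 fun ε hε ↦ ?_
  have hclose := eventually_comap.1 (hlim.eventually (closedBall_mem_nhds l hε))
  filter_upwards [hclose, eventually_lt_atBot τ] with t hz ht
  simp only [mem_closedBall, Real.dist_eq, abs_le] at hz ⊢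
  have hcont := continuous_comp_vertical hf ht
  have hlower := le_verticalMean hcont (c := l - ε + k * t) fun z hzt ↦ by
    linarith [(hz z hzt).1, congrArg (k * ·) hzt]
  have hupper := verticalMean_le hcont (c := l + ε + k * t) fun z hzt ↦ by
    linarith [(hz z hzt).2, congrArg (k * ·) hzt]
  exact ⟨by linarith, by linarith⟩

theorem hasDerivAt_verticalMean (hf : ∀ z : ℂ, z.re < τ → ContDiffAt ℝ 1 f z) (ht : t < τ) :
    HasDerivAt (verticalMean f) (verticalMean (fun z ↦ fderiv ℝ f z 1) t) t := by
  obtain ⟨r, htr, hrτ⟩ := exists_between ht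
  set K : Set ℂ := Icc (t - 1) r ×ℂ Icc 0 (2 * Real.pi)
  have hfderiv : ∀ z : ℂ, z.re < τ → ContinuousAt (fun z ↦ fderiv ℝ f z 1) z := fun z hz ↦
    ((hf z hz).fderiv_right (m := 0) (by norm_num)).continuousAt.clm_apply continuousAt_const
  have hK : IsCompact K := isCompact_Icc.reProdIm isCompact_Icc
  obtain ⟨C, hC⟩ := hK.exists_bound_of_continuousOn fun z hz ↦
    (hfderiv z (hz.1.2.trans_lt hrτ)).continuousWithinAt
  have hcont : ∀ z : ℂ, z.re < τ → ContinuousAt f z := fun z hz ↦ (hf z hz).continuousAt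
  refine (intervalIntegral.hasDerivAt_integral_of_dominated_loc_of_deriv_le
    (F := fun (t θ : ℝ) ↦ f (t + θ * Complex.I))
    (F' := fun (t θ : ℝ) ↦ fderiv ℝ f (t + θ * Complex.I) 1) (bound := fun _ ↦ C)
    (Ioo_mem_nhds (sub_one_lt t) htr) ?_
    ((continuous_comp_vertical hcont ht).intervalIntegrable _ _)
    (continuous_comp_vertical hfderiv ht).aestronglyMeasurable ?_ intervalIntegrable_const
    ?_).2.const_mul _
  · filter_upwards [gt_mem_nhds ht] with t' ht'
    exact (continuous_comp_vertical hcont ht').aestronglyMeasurable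
  · refine .of_forall fun θ hθ t' ht' ↦ hC _ ⟨?_, ?_⟩
    · simpa only [mem_preimage, Complex.add_re, Complex.ofReal_re, Complex.re_ofReal_mul,
        Complex.I_re, mul_zero, add_zero] using Ioo_subset_Icc_self ht'
    · rw [uIoc_of_le Real.two_pi_pos.le] at hθ
      simpa using ⟨hθ.1.le, hθ.2⟩
  · refine .of_forall fun θ _ t' ht' ↦ ?_
    have := hasDerivAt_comp_line (f := f) (x := θ * Complex.I) (v := 1) (t := t')
      ((hf _ (by simpa using ht'.2.trans hrτ)).differentiableAt one_ne_zero)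
    simpa [add_comm] using this

theorem verticalMean_fderiv_I_eq_zero (hper : Function.Periodic f (2 * Real.pi * Complex.I))
    (hf : ∀ z : ℂ, z.re < τ → ContDiffAt ℝ 1 f z) (ht : t < τ) :
    verticalMean (fun z ↦ fderiv ℝ f z Complex.I) t = 0 := by
  have hcont : ∀ z : ℂ, z.re < τ → ContinuousAt (fun z ↦ fderiv ℝ f z Complex.I) z := fun z hz ↦
    ((hf z hz).fderiv_right (m := 0) (by norm_num)).continuousAt.clm_apply continuousAt_const
  have hderiv (θ : ℝ) : HasDerivAt (fun θ : ℝ ↦ f (t + θ * Complex.I))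
      (fderiv ℝ f (t + θ * Complex.I) Complex.I) θ := by
    have := hasDerivAt_comp_line (f := f) (x := t) (v := Complex.I) (t := θ)
      ((hf _ (by simpa using ht)).differentiableAt one_ne_zero)
    simpa using this
  rw [verticalMean, intervalIntegral.integral_eq_sub_of_hasDerivAt (fun θ _ ↦ hderiv θ)
    ((continuous_comp_vertical hcont ht).intervalIntegrable _ _)]
  simp [hper (t : ℂ)]

end VerticalMean

section LimitAtBot

variable {g g' g'' : ℝ → ℝ} {τ l t : ℝ}

theorem le_of_tendsto_atBot_of_deriv_nonneg (hg : ∀ t < τ, HasDerivAt g (g' t) t)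
    (hg' : ∀ t < τ, 0 ≤ g' t) (hlim : Tendsto g atBot (𝓝 l)) (ht : t < τ) : l ≤ g t := by
  have hmono : MonotoneOn g (Iio τ) :=
    monotoneOn_of_hasDerivWithinAt_nonneg (convex_Iio τ)
      (fun t ht ↦ (hg t ht).continuousAt.continuousWithinAt)
      (fun t ht ↦ (hg t (interior_subset (s := Iio τ) ht)).hasDerivWithinAt)
      fun t ht ↦ hg' t (interior_subset (s := Iio τ) ht)
  refine le_of_tendsto hlim ?_
  filter_upwards [eventually_le_atBot t] with r hr
  exact hmono (hr.trans_lt ht) ht hr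

theorem le_of_tendsto_atBot_of_neg_exp_le_deriv_deriv {k b M : ℝ}
    (hg : ∀ t < τ, HasDerivAt g (g' t) t) (hg' : ∀ t < τ, HasDerivAt g' (g'' t) t)
    (hg'' : ∀ t < τ, -(b * Real.exp (M + 2 * t)) ≤ g'' t) (hlim' : Tendsto g' atBot (𝓝 k))
    (hlim : Tendsto (fun t ↦ g t - k * t) atBot (𝓝 l)) (ht : t < τ) :
    l + k * t - b / 4 * Real.exp (M + 2 * t) ≤ g t := by
  have hexp : Tendsto (fun t : ℝ ↦ Real.exp (M + 2 * t)) atBot (𝓝 0) :=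
    Real.tendsto_exp_atBot.comp
      (tendsto_atBot_add_const_left _ M (tendsto_id.const_mul_atBot two_pos))
  have hdexp (t : ℝ) : HasDerivAt (fun t : ℝ ↦ Real.exp (M + 2 * t))
      (Real.exp (M + 2 * t) * 2) t := by
    simpa using (((hasDerivAt_id' t).const_mul 2).const_add M).exp
  have hfirst : ∀ t < τ, k ≤ g' t + b / 2 * Real.exp (M + 2 * t) := fun t ht ↦
    le_of_tendsto_atBot_of_deriv_nonneg (g := fun t ↦ g' t + b / 2 * Real.exp (M + 2 * t))
      (fun t ht ↦ (hg' t ht).fun_add ((hdexp t).const_mul (b / 2)))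
      (fun t ht ↦ by linarith [hg'' t ht])
      (by simpa using hlim'.add (hexp.const_mul (b / 2))) ht
  have hsecond := le_of_tendsto_atBot_of_deriv_nonneg
    (g := fun t ↦ g t - k * t + b / 4 * Real.exp (M + 2 * t))
    (fun t ht ↦ ((hg t ht).fun_sub ((hasDerivAt_id' t).const_mul k)).fun_add
      ((hdexp t).const_mul (b / 4)))
    (fun t ht ↦ by linarith [hfirst t ht])
    (by simpa using hlim.add (hexp.const_mul (b / 4))) ht
  linarith

end LimitAtBot

section MeanContradiction

variable {φ W : ℂ → ℝ} {τ a b M ℓ t : ℝ}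

namespace IsCylinderSolution

theorem contDiffAt_fderiv_apply (hφ : IsCylinderSolution φ W τ) (v : ℂ) {z : ℂ} (hz : z.re < τ) :
    ContDiffAt ℝ 1 (fun z ↦ fderiv ℝ φ z v) z :=
  ((hφ.contDiffAt z hz).fderiv_right (m := 1) (by norm_num)).clm_apply contDiffAt_const

protected theorem hasDerivAt_verticalMean (hφ : IsCylinderSolution φ W τ) (ht : t < τ) :
    HasDerivAt (verticalMean φ) (verticalMean (fun z ↦ fderiv ℝ φ z 1) t) t :=
  hasDerivAt_verticalMean (fun z hz ↦ (hφ.contDiffAt z hz).of_le (by norm_num)) ht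

theorem continuous_laplacian_comp_vertical (hφ : IsCylinderSolution φ W τ) (ht : t < τ) :
    Continuous fun θ : ℝ ↦ Δ φ (t + θ * Complex.I) :=
  continuous_comp_vertical (τ := τ) (fun z hz ↦ by
    have hcont (v : ℂ) : ContinuousAt (fun z ↦ fderiv ℝ (fderiv ℝ φ) z v v) z :=
      ((((hφ.contDiffAt z hz).fderiv_right (m := 1) (by norm_num)).fderiv_right (m := 0)
        (by norm_num)).continuousAt.clm_apply continuousAt_const).clm_apply continuousAt_const
    simpa only [funext (laplacian_eq_fderiv_fderiv_complex φ)] using (hcont 1).fun_add (hcont _)) ht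

theorem hasDerivAt_verticalMean_fderiv (hφ : IsCylinderSolution φ W τ) (ht : t < τ) :
    HasDerivAt (verticalMean fun z ↦ fderiv ℝ φ z 1) (verticalMean (Δ φ) t) t := by
  have hpartial (v : ℂ) : ∀ z : ℂ, z.re < τ → ContDiffAt ℝ 1 (fun z ↦ fderiv ℝ φ z v) z :=
    fun z hz ↦ hφ.contDiffAt_fderiv_apply v hz
  have hcont (v : ℂ) := continuous_comp_vertical
    (f := fun z ↦ fderiv ℝ (fun z ↦ fderiv ℝ φ z v) z v)
    (fun z hz ↦ ((hpartial v z hz).fderiv_right (m := 0)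
      (by norm_num)).continuousAt.clm_apply continuousAt_const) ht
  have hperiodic : Function.Periodic (fun z ↦ fderiv ℝ φ z Complex.I) (2 * Real.pi * Complex.I) :=
    fun z ↦ by simp only [← fderiv_comp_add_right, hφ.periodic _]
  refine (hasDerivAt_verticalMean (hpartial 1) ht).congr_deriv ?_
  calc verticalMean (fun z ↦ fderiv ℝ (fun z ↦ fderiv ℝ φ z 1) z 1) t
      = verticalMean (fun z ↦ fderiv ℝ (fun z ↦ fderiv ℝ φ z 1) z 1 +
          fderiv ℝ (fun z ↦ fderiv ℝ φ z Complex.I) z Complex.I) t := by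
        rw [verticalMean_add (hcont 1) (hcont Complex.I),
          verticalMean_fderiv_I_eq_zero hperiodic (hpartial Complex.I) ht, add_zero]
    _ = verticalMean (Δ φ) t := by
        refine congrArg _ (intervalIntegral.integral_congr fun θ _ ↦ ?_)
        have hre : ((t : ℂ) + θ * Complex.I).re < τ := by simpa using ht
        simp only [laplacian_eq_fderiv_fderiv_complex,
          fderiv_fderiv_apply_const (hφ.contDiffAt _ hre)]

theorem tendsto_verticalMean_fderiv (hφ : IsCylinderSolution φ W τ)
    (hlim' : Tendsto (fun z ↦ fderiv ℝ φ z 1) (comap Complex.re atBot) (𝓝 2)) :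
    Tendsto (verticalMean fun z ↦ fderiv ℝ φ z 1) atBot (𝓝 2) := by
  simpa using tendsto_verticalMean_sub_mul (k := 0)
    (fun z hz ↦ (hφ.contDiffAt_fderiv_apply 1 hz).continuousAt) (by simpa using hlim')

protected theorem le_verticalMean (hφ : IsCylinderSolution φ W τ)
    (hb₀ : 0 ≤ b) (hb : ∀ z : ℂ, z.re < τ → W z ≤ b)
    (hM : ∀ z : ℂ, z.re < τ → φ z ≤ M + 2 * z.re)
    (hlim : Tendsto (fun z ↦ φ z - 2 * z.re) (comap Complex.re atBot) (𝓝 M))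
    (hlim' : Tendsto (fun z ↦ fderiv ℝ φ z 1) (comap Complex.re atBot) (𝓝 2)) (ht : t < τ) :
    M + 2 * t - b / 4 * Real.exp (M + 2 * t) ≤ verticalMean φ t := by
  refine le_of_tendsto_atBot_of_neg_exp_le_deriv_deriv
    (fun t ht ↦ hφ.hasDerivAt_verticalMean ht) (fun t ht ↦ hφ.hasDerivAt_verticalMean_fderiv ht)
    (fun t ht ↦ le_verticalMean (hφ.continuous_laplacian_comp_vertical ht)
      fun z hz ↦ ?_)
    ?_ (tendsto_verticalMean_sub_mul (fun z hz ↦ (hφ.contDiffAt z hz).continuousAt) hlim) ht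
  · rw [hφ.laplacian_eq z (hz ▸ ht)]
    gcongr
    · exact hb z (hz ▸ ht)
    · exact hz ▸ hM z (hz ▸ ht)
  · exact hφ.tendsto_verticalMean_fderiv hlim'

theorem verticalMean_laplacian_le (hφ : IsCylinderSolution φ W τ) (ha : 0 ≤ a)
    (hW : ∀ z : ℂ, z.re < τ → a ≤ W z) (ht : t < τ) :
    verticalMean (Δ φ) t ≤ -(a * Real.exp (verticalMean φ t)) := by
  set μ := verticalMean φ t
  have hφt := continuous_comp_vertical (fun z hz ↦ (hφ.contDiffAt z hz).continuousAt) ht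
  have htangent (x : ℝ) : Real.exp μ * (x + (1 - μ)) ≤ Real.exp x := by
    calc Real.exp μ * (x + (1 - μ)) ≤ Real.exp μ * Real.exp (x - μ) := by
          gcongr
          linarith [Real.add_one_le_exp (x - μ)]
      _ = Real.exp x := by rw [← Real.exp_add, add_sub_cancel]
  calc verticalMean (Δ φ) t
      ≤ verticalMean (fun z ↦ -(a * Real.exp μ) * (φ z + (1 - μ))) t := by
        refine verticalMean_mono (hφ.continuous_laplacian_comp_vertical ht)
          (continuous_const.mul (hφt.add continuous_const)) fun z hz ↦ ?_
        rw [hφ.laplacian_eq z (hz ▸ ht), neg_mul, mul_assoc]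
        refine neg_le_neg ((mul_le_mul_of_nonneg_left (htangent _) ha).trans ?_)
        gcongr
        exact hW z (hz ▸ ht)
    _ = -(a * Real.exp μ) := by
        rw [verticalMean_const_mul, verticalMean_add hφt continuous_const, verticalMean_const]
        ring

theorem verticalMean_fderiv_le (hφ : IsCylinderSolution φ W τ)
    (hW : ∀ z : ℂ, z.re < τ → 0 ≤ W z)
    (hlim' : Tendsto (fun z ↦ fderiv ℝ φ z 1) (comap Complex.re atBot) (𝓝 2)) (ht : t < τ) :
    verticalMean (fun z ↦ fderiv ℝ φ z 1) t ≤ 2 := by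
  refine neg_le_neg_iff.1 (le_of_tendsto_atBot_of_deriv_nonneg
    (g := fun t ↦ -verticalMean (fun z ↦ fderiv ℝ φ z 1) t)
    (fun t ht ↦ (hφ.hasDerivAt_verticalMean_fderiv ht).neg) (fun t ht ↦ ?_)
    (tendsto_verticalMean_fderiv hφ hlim').neg ht)
  refine neg_nonneg.2 (verticalMean_le (hφ.continuous_laplacian_comp_vertical ht) fun z hz ↦ ?_)
  rw [hφ.laplacian_eq z (hz ▸ ht), neg_nonpos]
  exact mul_nonneg (hW z (hz ▸ ht)) (Real.exp_pos _).le

theorem verticalMean_fderiv_nonneg (hφ : IsCylinderSolution φ W τ) (ht : t < τ)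
    (hmono : ∀ z : ℂ, z.re = t → 0 ≤ fderiv ℝ φ z 1) :
    0 ≤ verticalMean (fun z ↦ fderiv ℝ φ z 1) t :=
  le_verticalMean (continuous_comp_vertical
    (fun _ hz ↦ (hφ.contDiffAt_fderiv_apply 1 hz).continuousAt) ht) hmono

theorem neg_div_four_le_verticalMean (hφ : IsCylinderSolution φ W τ)
    (hb₀ : 0 ≤ b) (hb : ∀ z : ℂ, z.re < τ → W z ≤ b)
    (hM : ∀ z : ℂ, z.re < τ → φ z ≤ M + 2 * z.re)
    (hlim : Tendsto (fun z ↦ φ z - 2 * z.re) (comap Complex.re atBot) (𝓝 M))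
    (hlim' : Tendsto (fun z ↦ fderiv ℝ φ z 1) (comap Complex.re atBot) (𝓝 2))
    (hmono : ∀ z : ℂ, z.re ≤ t → 0 ≤ fderiv ℝ φ z 1) (hMt : -M / 2 ≤ t) (ht : t < τ) :
    -b / 4 ≤ verticalMean φ t := by
  have hmonotone : MonotoneOn (verticalMean φ) (Iic t) :=
    monotoneOn_of_hasDerivWithinAt_nonneg (convex_Iic t)
      (fun r hr ↦ (hφ.hasDerivAt_verticalMean (hr.trans_lt ht)).continuousAt.continuousWithinAt)
      (fun r hr ↦ (hφ.hasDerivAt_verticalMean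
        ((mem_Iic.1 (interior_subset hr)).trans_lt ht)).hasDerivWithinAt)
      fun r hr ↦ hφ.verticalMean_fderiv_nonneg ((mem_Iic.1 (interior_subset hr)).trans_lt ht)
        fun _ hz ↦ hmono _ (hz.trans_le (mem_Iic.1 (interior_subset hr)))
  have hbase := hφ.le_verticalMean hb₀ hb hM hlim hlim' (hMt.trans_lt ht)
  rw [show M + 2 * (-M / 2) = 0 by ring, Real.exp_zero] at hbase
  linarith [hmonotone hMt self_mem_Iic hMt]

theorem mul_exp_le_two (hφ : IsCylinderSolution φ W τ) (ha : 0 ≤ a)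
    (hW : ∀ z : ℂ, z.re < τ → W z ∈ Icc a b) (hM : ∀ z : ℂ, z.re < τ → φ z ≤ M + 2 * z.re)
    (hlim : Tendsto (fun z ↦ φ z - 2 * z.re) (comap Complex.re atBot) (𝓝 M))
    (hlim' : Tendsto (fun z ↦ fderiv ℝ φ z 1) (comap Complex.re atBot) (𝓝 2))
    (hℓ : 0 ≤ ℓ) (hτ : -M / 2 + ℓ < τ)
    (hmono : ∀ z : ℂ, z.re ≤ -M / 2 + ℓ → 0 ≤ fderiv ℝ φ z 1) :
    ℓ * (a * Real.exp (-b / 4)) ≤ 2 := by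
  set t₀ := -M / 2
  have hb : 0 ≤ b := by
    obtain ⟨h₁, h₂⟩ := hW t₀ (by simpa using (le_add_of_nonneg_right hℓ).trans_lt hτ)
    exact ha.trans (h₁.trans h₂)
  have hlt : ∀ t ∈ Icc t₀ (t₀ + ℓ), t < τ := fun t ht ↦ ht.2.trans_lt hτ
  have hstart : t₀ ∈ Icc t₀ (t₀ + ℓ) := ⟨le_rfl, le_add_of_nonneg_right hℓ⟩
  have hend : t₀ + ℓ ∈ Icc t₀ (t₀ + ℓ) := ⟨hstart.2, le_rfl⟩
  have hmean : ∀ t ∈ Icc t₀ (t₀ + ℓ), -b / 4 ≤ verticalMean φ t := fun t ht ↦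
    hφ.neg_div_four_le_verticalMean hb (fun z hz ↦ (hW z hz).2) hM hlim hlim'
      (fun z hz ↦ hmono z (hz.trans ht.2)) ht.1 (hlt t ht)
  have hconcave : ∀ t ∈ Icc t₀ (t₀ + ℓ), verticalMean (Δ φ) t ≤ -(a * Real.exp (-b / 4)) :=
    fun t ht ↦ (hφ.verticalMean_laplacian_le ha (fun z hz ↦ (hW z hz).1) (hlt t ht)).trans
      (by gcongr; exact hmean t ht)
  have hdrop := (convex_Icc t₀ (t₀ + ℓ)).image_sub_le_mul_sub_of_deriv_le
    (f := verticalMean fun z ↦ fderiv ℝ φ z 1) (C := -(a * Real.exp (-b / 4)))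
    (fun t ht ↦ (hφ.hasDerivAt_verticalMean_fderiv (hlt t ht)).continuousAt.continuousWithinAt)
    (fun t ht ↦ (hφ.hasDerivAt_verticalMean_fderiv
      (hlt t (interior_subset ht))).differentiableAt.differentiableWithinAt)
    (fun t ht ↦ (hφ.hasDerivAt_verticalMean_fderiv
      (hlt t (interior_subset ht))).deriv.trans_le (hconcave t (interior_subset ht)))
    t₀ hstart (t₀ + ℓ) hend hstart.2
  have htop := hφ.verticalMean_fderiv_le (fun z hz ↦ ha.trans (hW z hz).1) hlim' (hlt t₀ hstart)
  have hbot := hφ.verticalMean_fderiv_nonneg hτ fun z hz ↦ hmono z hz.le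
  linarith

end IsCylinderSolution

end MeanContradiction

section LogPolar

/-- The log-polar (Emden–Fowler) form `u(c + e^z) + 2 re z` of `u` about `c`. The term `2 re z`
makes it solve the same Liouville equation as `u`. -/
noncomputable def logPolar (u : ℂ → ℝ) (c z : ℂ) : ℝ :=
  u (c + Complex.exp z) + 2 * z.re

variable {u V : ℂ → ℝ} {c z : ℂ} {d A s l : ℝ}

theorem add_exp_mem_ball (hd : 0 < d) (hz : z.re < Real.log d) : c + Complex.exp z ∈ ball c d := by
  rwa [mem_ball_iff_norm, add_sub_cancel_left, Complex.norm_exp, ← Real.lt_log_iff_exp_lt hd]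

theorem tendsto_add_exp_comap_re_atBot (c : ℂ) :
    Tendsto (fun z ↦ c + Complex.exp z) (comap Complex.re atBot) (𝓝 c) := by
  simpa using Complex.tendsto_exp_comap_re_atBot.const_add c

theorem tendsto_logPolar_sub (hu : ContinuousAt u c) :
    Tendsto (fun z ↦ logPolar u c z - 2 * z.re) (comap Complex.re atBot) (𝓝 (u c)) := by
  simpa only [logPolar, add_sub_cancel_right, Function.comp_def]
    using hu.tendsto.comp (tendsto_add_exp_comap_re_atBot c)

theorem fderiv_logPolar_one (hu : DifferentiableAt ℝ u (c + Complex.exp z)) :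
    fderiv ℝ (logPolar u c) z 1 =
      fderiv ℝ u (c + Complex.exp z) (Complex.exp z) + 2 := by
  have hexp : HasFDerivAt (fun w ↦ c + Complex.exp w)
      ((Complex.exp z • (1 : ℂ →L[ℂ] ℂ)).restrictScalars ℝ) z :=
    ((Complex.hasStrictFDerivAt_exp_real z).hasFDerivAt.const_add c)
  have h := (hu.hasFDerivAt.comp z hexp).add (Complex.reCLM.hasFDerivAt.const_mul 2)
  rw [show logPolar u c = (u ∘ fun w ↦ c + Complex.exp w) + fun w ↦ 2 * Complex.reCLM w from rfl,
    h.fderiv]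
  simp

theorem tendsto_fderiv_logPolar_one (hu : ContDiffAt ℝ 2 u c) :
    Tendsto (fun z ↦ fderiv ℝ (logPolar u c) z 1) (comap Complex.re atBot) (𝓝 2) := by
  have hcenter := tendsto_add_exp_comap_re_atBot c
  have hdiff : ∀ᶠ y in 𝓝 c, DifferentiableAt ℝ u y :=
    (hu.eventually (by simp)).mono fun y hy ↦ hy.differentiableAt (by norm_num)
  have hcont : ContinuousAt (fun w ↦ fderiv ℝ u (c + w) w + 2) 0 := by
    refine (ContinuousAt.clm_apply ?_ continuousAt_id).add continuousAt_const
    refine ContinuousAt.comp (f := fun w ↦ c + w) (g := fderiv ℝ u) ?_ (by fun_prop)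
    simpa using (hu.fderiv_right (m := 1) (by norm_num)).continuousAt
  have hlim := hcont.tendsto.comp Complex.tendsto_exp_comap_re_atBot
  rw [map_zero, zero_add] at hlim
  exact hlim.congr' ((hcenter.eventually hdiff).mono fun z hz ↦ (fderiv_logPolar_one hz).symm)

theorem isCylinderSolution_logPolar (hd : 0 < d) (hu : ContDiffOn ℝ 2 u (ball c d))
    (hpde : ∀ y ∈ ball c d, Δ u y = -(V y * Real.exp (u y))) :
    IsCylinderSolution (logPolar u c) (fun z ↦ V (c + Complex.exp z)) (Real.log d) where
  contDiffAt z hz := by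
    have hexp : ContDiffAt ℝ 2 (fun w ↦ c + Complex.exp w) z :=
      contDiffAt_const.add Complex.contDiff_exp.contDiffAt
    exact ((hu.contDiffAt (isOpen_ball.mem_nhds (add_exp_mem_ball hd hz))).comp z hexp).add
      (contDiff_const.mul Complex.reCLM.contDiff).contDiffAt
  periodic z := by
    simp [logPolar, Complex.exp_periodic z]
  laplacian_eq z hz := by
    have hmem := add_exp_mem_ball (c := c) hd hz
    have hcd : ContDiffAt ℝ 2 (fun w ↦ u (c + Complex.exp w)) z :=
      (hu.contDiffAt (isOpen_ball.mem_nhds hmem)).comp z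
        (contDiffAt_const.add Complex.contDiff_exp.contDiffAt)
    have hlin : ContDiffAt ℝ 2 (fun t : ℝ ↦ 2 * t) z.re := by fun_prop
    have hsum := hcd.laplacian_add (f₂ := fun w : ℂ ↦ 2 * w.re)
      (hlin.comp z Complex.reCLM.contDiff.contDiffAt)
    rw [laplacian_comp_const_add_exp (hu.contDiffAt (isOpen_ball.mem_nhds hmem)),
      laplacian_comp_re hlin, hpde _ hmem] at hsum
    refine hsum.trans ?_
    simp [logPolar, Real.exp_add]
    ring

theorem norm_exp_reflectRe_sub_exp_le (hlz : l ≤ z.re) :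
    ‖Complex.exp (reflectRe l z) - Complex.exp z‖ ≤ Real.exp z.re := by
  set r := Real.exp (2 * (l - z.re))
  have hr : r ≤ 1 := Real.exp_le_one_iff.2 (by linarith)
  have hrefl : reflectRe l z = (2 * (l - z.re) : ℝ) + z := by
    apply Complex.ext <;> simp [reflectRe]
    ring
  have hsub : Complex.exp (reflectRe l z) - Complex.exp z = ((r - 1 : ℝ) : ℂ) * Complex.exp z := by
    rw [hrefl, Complex.exp_add, ← Complex.ofReal_exp, Complex.ofReal_sub, Complex.ofReal_one,
      sub_one_mul]
  rw [hsub, norm_mul, Complex.norm_exp, Complex.norm_real, Real.norm_eq_abs]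
  refine mul_le_of_le_one_left (Real.exp_pos _).le (abs_le.2 ⟨?_, ?_⟩) <;>
    linarith [Real.exp_pos (2 * (l - z.re))]

theorem abs_comp_exp_reflectRe_sub_le (hd : 0 < d) (hs : 0 ≤ s) (hlz : l ≤ z.re)
    (hz : z.re < Real.log d)
    (hV : ∀ x ∈ ball c d, ∀ y ∈ ball c d, |V x - V y| ≤ A * ‖x - y‖ ^ s) :
    |V (c + Complex.exp (reflectRe l z)) - V (c + Complex.exp z)| ≤ A * Real.exp (s * z.re) := by
  have hz' := add_exp_mem_ball (c := c) hd hz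
  have hA : 0 ≤ A := by
    have h := (abs_nonneg _).trans (hV _ hz' c (mem_ball_self hd))
    rw [add_sub_cancel_left] at h
    exact nonneg_of_mul_nonneg_left h
      (Real.rpow_pos_of_pos (norm_pos_iff.2 (Complex.exp_ne_zero z)) s)
  calc |V (c + Complex.exp (reflectRe l z)) - V (c + Complex.exp z)|
      ≤ A * ‖c + Complex.exp (reflectRe l z) - (c + Complex.exp z)‖ ^ s :=
        hV _ (add_exp_mem_ball hd (reflectRe_re_lt hlz hz)) _ hz'
    _ ≤ A * Real.exp z.re ^ s := by
        gcongr
        rw [add_sub_add_left_eq_sub]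
        exact norm_exp_reflectRe_sub_exp_le hlz
    _ = A * Real.exp (s * z.re) := by rw [← Real.exp_mul, mul_comm s]

end LogPolar

section SupAddInf

variable {a s : ℝ}

theorem sup_add_inf_le_of_barrier {u V : ℂ → ℝ} {c : ℂ} {b A d m η ℓ : ℝ} (hd : 0 < d)
    (hd₁ : d ≤ 1) (hu : ContDiffOn ℝ 2 u (ball c d))
    (hpde : ∀ y ∈ ball c d, Δ u y = -(V y * Real.exp (u y)))
    (ha : 0 < a) (hV : ∀ y ∈ ball c d, V y ∈ Icc a b) (hs₀ : 0 ≤ s) (hs₁ : s ≤ 1)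
    (hVA : ∀ x ∈ ball c d, ∀ y ∈ ball c d, |V x - V y| ≤ A * ‖x - y‖ ^ s)
    (hmu : ∀ y ∈ ball c d, u y ∈ Icc m (u c))
    (hℓ : 2 < ℓ * (a * Real.exp (-b / 4))) (hη₀ : 0 ≤ η) (hη₂ : η ≤ 2) (hηc : η * u c ≤ 2)
    (hηA : A * Real.exp (2 * ℓ + s * (ℓ - u c / 2)) < η) :
    u c + m + 4 * Real.log d ≤ 4 * ℓ + 4 * Real.log 2 + 1 := by
  by_contra! hlarge
  set T := Real.log (d / 2) with hT
  set l₁ := -u c / 2 + ℓ with hl₁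
  rw [Real.log_div hd.ne' two_ne_zero] at hT
  have hℓ₀ : 0 ≤ ℓ := (pos_of_mul_pos_left (two_pos.trans hℓ) (by positivity)).le
  have hlog₂ := Real.log_pos one_lt_two
  have hTd : T < Real.log d := by linarith
  have hmc : m ≤ u c := (hmu c (mem_ball_self hd)).1
  have hbounds (z : ℂ) (hz : z.re < Real.log d) :
      logPolar u c z ∈ Icc (m + 2 * z.re) (u c + 2 * z.re) :=
    have := hmu _ (add_exp_mem_ball hd hz)
    ⟨add_le_add_left this.1 _, add_le_add_left this.2 _⟩
  have hηT : η * (T - l₁) ≤ 1 := by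
    have : T - l₁ ≤ u c / 2 := by linarith [Real.log_nonpos hd.le hd₁]
    linarith [mul_le_mul_of_nonneg_left this hη₀]
  have hηl₁ : A * Real.exp (u c + (2 + s) * l₁) < η := by
    convert hηA using 3
    rw [hl₁]
    ring
  have hφ := isCylinderSolution_logPolar hd hu hpde
  have hfderiv := tendsto_fderiv_logPolar_one (hu.contDiffAt (ball_mem_nhds c hd))
  have hmono : ∀ z : ℂ, z.re ≤ l₁ → 0 ≤ fderiv ℝ (logPolar u c) z 1 := fun z hz ↦
    hφ.fderiv_one_nonneg hTd (fun w hw ↦ (hbounds w (hw.trans_lt hTd)).1)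
      (fun w hw ↦ (hbounds w (hw.trans_lt hTd)).2)
      (hfderiv.eventually (le_mem_nhds one_lt_two))
      (fun w hw ↦ ha.le.trans (hV _ (add_exp_mem_ball hd (hw.trans_lt hTd))).1)
      (fun l w hlw hw ↦ abs_comp_exp_reflectRe_sub_le hd hs₀ hlw (hw.trans_lt hTd) hVA)
      hs₀ hs₁ hη₀ hη₂ hηl₁ (by linarith) hz
  have hle := hφ.mul_exp_le_two ha.le (fun z hz ↦ hV _ (add_exp_mem_ball hd hz))
    (fun z hz ↦ (hbounds z hz).2)
    (tendsto_logPolar_sub (hu.continuousOn.continuousAt (ball_mem_nhds c hd))) hfderiv hℓ₀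
    (by linarith) hmono
  exact hle.not_gt hℓ

theorem tendsto_const_mul_exp_mul_self_atTop (hs : 0 < s) (K r p : ℝ) :
    Tendsto (fun M ↦ K * Real.exp (r + s * (p - M / 2)) * M) atTop (𝓝 0) := by
  have h := (tendsto_rpow_mul_exp_neg_mul_atTop_nhds_zero 1 (s / 2) (half_pos hs)).const_mul
    (K * Real.exp (r + s * p))
  rw [mul_zero] at h
  refine h.congr fun M ↦ ?_
  rw [show r + s * (p - M / 2) = r + s * p + -(s / 2) * M by ring, Real.exp_add (r + s * p),
    Real.rpow_one]
  ring

theorem exists_sup_add_inf_le (ha : 0 < a) (b A : ℝ) (hs₀ : 0 < s) (hs₁ : s ≤ 1) :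
    ∃ C, ∀ (u V : ℂ → ℝ) (c : ℂ) (d m : ℝ), 0 < d → d ≤ 1 → ContDiffOn ℝ 2 u (ball c d) →
      (∀ y ∈ ball c d, Δ u y = -(V y * Real.exp (u y))) → (∀ y ∈ ball c d, V y ∈ Icc a b) →
      (∀ x ∈ ball c d, ∀ y ∈ ball c d, |V x - V y| ≤ A * ‖x - y‖ ^ s) →
      (∀ y ∈ ball c d, u y ∈ Icc m (u c)) → u c + m + 4 * Real.log d ≤ C := by
  set κ := a * Real.exp (-b / 4)
  have hκ : 0 < κ := by positivity
  set ℓ := 3 / κ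
  set η : ℝ → ℝ := fun M ↦ (|A| + 1) * Real.exp (2 * ℓ + s * (ℓ - M / 2))
  have hη (M : ℝ) : 0 ≤ η M := by positivity
  have hηA (M : ℝ) : A * Real.exp (2 * ℓ + s * (ℓ - M / 2)) < η M :=
    mul_lt_mul_of_pos_right (by linarith [le_abs_self A]) (Real.exp_pos _)
  obtain ⟨M₀, hM₀⟩ := eventually_atTop.1
    ((tendsto_const_mul_exp_mul_self_atTop hs₀ (|A| + 1) (2 * ℓ) ℓ).eventually
      (ge_mem_nhds two_pos))
  set M₁ := max M₀ 1
  refine ⟨max (2 * M₁) (4 * ℓ + 4 * Real.log 2 + 1),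
    fun u V c d m hd hd₁ hu hpde hV hVA hmu ↦ ?_⟩
  rcases le_total (u c) M₁ with hsmall | hlarge
  · have := (hmu c (mem_ball_self hd)).1
    exact le_max_of_le_left (by linarith [Real.log_nonpos hd.le hd₁])
  · have hc : 1 ≤ u c := (le_max_right _ _).trans hlarge
    have hηc : η (u c) * u c ≤ 2 := hM₀ _ ((le_max_left _ _).trans hlarge)
    have hη₂ : η (u c) ≤ 2 := (le_mul_of_one_le_right (hη _) hc).trans hηc
    have hℓ : 2 < ℓ * κ := by rw [div_mul_cancel₀ _ hκ.ne']; norm_num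
    exact le_max_of_le_right (sup_add_inf_le_of_barrier hd hd₁ hu hpde ha hV hs₀.le hs₁ hVA hmu
      hℓ (hη _) hη₂ hηc (hηA _))

end SupAddInf

section Transport

variable {E : Type*} [NormedAddCommGroup E] [InnerProductSpace ℝ E] [FiniteDimensional ℝ E]

theorem exists_sup_add_inf_le_of_linearIsometryEquiv (L : ℂ ≃ₗᵢ[ℝ] E) {a : ℝ} (ha : 0 < a)
    (b A : ℝ) {s : ℝ} (hs₀ : 0 < s) (hs₁ : s ≤ 1) :
    ∃ C, ∀ (u V : E → ℝ) (c : E) (d m : ℝ), 0 < d → d ≤ 1 → ContDiffOn ℝ 2 u (ball c d) →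
      (∀ y ∈ ball c d, Δ u y = -(V y * Real.exp (u y))) → (∀ y ∈ ball c d, V y ∈ Icc a b) →
      (∀ x ∈ ball c d, ∀ y ∈ ball c d, |V x - V y| ≤ A * ‖x - y‖ ^ s) →
      (∀ y ∈ ball c d, u y ∈ Icc m (u c)) → u c + m + 4 * Real.log d ≤ C := by
  obtain ⟨C, hC⟩ := exists_sup_add_inf_le ha b A hs₀ hs₁
  refine ⟨C, fun u V c d m hd hd₁ hu hpde hV hVA hmu ↦ ?_⟩
  have hmem : ∀ z ∈ ball (0 : ℂ) d, c + L z ∈ ball c d := fun z hz ↦ by simpa using hz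
  have hball := hC (fun z ↦ u (c + L z)) (fun z ↦ V (c + L z)) 0 d m hd hd₁
    (hu.comp (contDiff_const.add L.contDiff).contDiffOn hmem)
    (fun z hz ↦ (laplacian_comp_const_add_isometry c L
      (hu.contDiffAt (isOpen_ball.mem_nhds (hmem z hz)))).trans (hpde _ (hmem z hz)))
    (fun z hz ↦ hV _ (hmem z hz))
    (fun w hw z hz ↦ by
      simpa [← map_sub, L.norm_map] using hVA _ (hmem w hw) _ (hmem z hz))
    (fun z hz ↦ by simpa using hmu _ (hmem z hz))
  simpa using hball

end Transport

section Frontier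

variable {E : Type*} [NormedAddCommGroup E] [NormedSpace ℝ E] {Ω : Set E} {x : E}

theorem ball_infDist_frontier_subset (hΩ : IsOpen Ω) (hx : x ∈ Ω) :
    ball x (infDist x (frontier Ω)) ⊆ Ω := by
  rcases (infDist_nonneg (x := x) (s := frontier Ω)).eq_or_lt with h₀ | hpos
  · simp [← h₀]
  have : PreconnectedSpace (ball x (infDist x (frontier Ω))) :=
    Subtype.preconnectedSpace (convex_ball _ _).isPreconnected
  have huniv := (isClopen_preimage_val hΩ disjoint_ball_infDist.symm).eq_univ
    ⟨⟨x, mem_ball_self hpos⟩, hx⟩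
  rwa [preimage_eq_univ_iff, Subtype.range_coe] at huniv

theorem infDist_frontier_pos [Nontrivial E] (hΩ : IsOpen Ω) (hbdd : Bornology.IsBounded Ω)
    (hx : x ∈ Ω) : 0 < infDist x (frontier Ω) := by
  have hne : (frontier Ω).Nonempty :=
    nonempty_frontier_iff.2 ⟨⟨x, hx⟩, fun h ↦ NormedSpace.unbounded_univ ℝ E (h ▸ hbdd)⟩
  rw [← isClosed_frontier.notMem_iff_infDist_pos hne, hΩ.frontier_eq]
  exact fun h ↦ h.2 hx

end Frontier

section Mass

variable {α : Type*} [MeasurableSpace α] {ν : Measure α} {S : Set α} {f g : α → ℝ} {K m : ℝ}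

theorem exists_div_lt_of_le_setIntegral_mul (hS : MeasurableSet S) (hg : IntegrableOn g S ν)
    (hg₀ : ∀ y ∈ S, 0 ≤ g y) (hgK : ∫ y in S, g y ∂ν < K) (hm : 0 < m)
    (hfg : m ≤ ∫ y in S, f y * g y ∂ν) : ∃ y ∈ S, m / K < f y := by
  by_contra! hf
  have hK : 0 < K := (setIntegral_nonneg hS hg₀).trans_lt hgK
  have hint : IntegrableOn (fun y ↦ f y * g y) S ν :=
    not_imp_comm.1 integral_undef (hm.trans_le hfg).ne'
  refine hfg.not_gt ?_
  calc ∫ y in S, f y * g y ∂ν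
      ≤ ∫ y in S, m / K * g y ∂ν := setIntegral_mono_on hint (hg.const_mul _) hS
        fun y hy ↦ mul_le_mul_of_nonneg_right (hf y hy) (hg₀ y hy)
    _ = m / K * ∫ y in S, g y ∂ν := integral_const_mul _ _
    _ < m / K * K := mul_lt_mul_of_pos_left hgK (div_pos hm hK)
    _ = m := div_mul_cancel₀ m hK.ne'

end Mass

theorem abs_sub_le_of_mem_ball {E : Type*} [SeminormedAddCommGroup E] {f : E → ℝ} {x y z : E}
    {A d s : ℝ} (hs : 0 ≤ s)
    (hf : ∀ y ∈ ball x d, ∀ z ∈ ball x d, |f y - f z| ≤ A * ‖y - z‖ ^ s)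
    (hy : y ∈ ball x d) (hz : z ∈ ball x d) : |f y - f z| ≤ |A| * (2 * d) ^ s := by
  have hnorm : ‖y - z‖ ≤ 2 * d := by
    rw [← dist_eq_norm]
    linarith [dist_triangle_right y z x, mem_ball.1 hy, mem_ball.1 hz]
  calc |f y - f z| ≤ A * ‖y - z‖ ^ s := hf y hy z hz
    _ ≤ |A| * (2 * d) ^ s := by gcongr; exact le_abs_self A

theorem lapl_eq_laplacian {u : E2 → ℝ} {x : E2} (hu : ContDiffAt ℝ 2 u x) :
    lapl u x = Δ u x := by
  have hpd : ∀ j, pd j (pd j u) x = fderiv ℝ (fderiv ℝ u) x (EuclideanSpace.single j 1)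
      (EuclideanSpace.single j 1) := fun j ↦ fderiv_fderiv_apply_const hu _ _
  simp [laplacian_eq_sum_fderiv_fderiv (EuclideanSpace.basisFun (Fin 2) ℝ), lapl, hpd]

section LiouvilleProblem

variable {Ω : Set E2} {s μ₀ : ℝ}

theorem exists_max_add_log_infDist_frontier_le (hΩ : IsOpen Ω) (hbdd : Bornology.IsBounded Ω)
    (b A C₀ : ℝ) (hs₀ : 0 < s) (hs₁ : s ≤ 1) (hμ₀ : 0 < μ₀) :
    ∃ C, ∀ᶠ d in 𝓝 (0 : ℝ), ∀ (u V : E2 → ℝ) (x : E2), infDist x (frontier Ω) = d →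
      ContinuousOn u (closure Ω) → ContDiffOn ℝ 2 u Ω → (∀ y ∈ Ω, V y ∈ Icc 0 b) →
      (∀ y ∈ Ω, ∀ z ∈ Ω, |V y - V z| ≤ A * ‖y - z‖ ^ s) →
      (∀ y ∈ Ω, -(lapl u y) = V y * Real.exp (u y)) → (∀ y ∈ frontier Ω, 0 ≤ u y) →
      ∫ y in Ω, Real.exp (u y) ≤ C₀ → x ∈ Ω → (∀ y ∈ Ω, u y ≤ u x) →
      μ₀ ≤ ∫ y in ball x (d / 2), V y * Real.exp (u y) → u x + 4 * Real.log d ≤ C := by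
  have hK : C₀ < |C₀| + 1 := (le_abs_self C₀).trans_lt (lt_add_one _)
  set a := μ₀ / (|C₀| + 1) / 2 with ha
  have ha₀ : 0 < a := by positivity
  obtain ⟨C, hC⟩ := exists_sup_add_inf_le_of_linearIsometryEquiv
    Complex.orthonormalBasisOneI.repr ha₀ b A hs₀ hs₁
  have hosc : Tendsto (fun d : ℝ ↦ |A| * (2 * d) ^ s) (𝓝 0) (𝓝 0) :=
    Continuous.tendsto' (by fun_prop (disch := exact hs₀.le)) _ _ (by simp [hs₀.ne'])
  refine ⟨C, ?_⟩
  filter_upwards [hosc.eventually (ge_mem_nhds ha₀), ge_mem_nhds one_pos] with d hda hd₁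
    u V x hd hcont hu hV hVA hpde hfrontier hint hx hmax hmass
  have hd₀ : 0 < d := hd ▸ infDist_frontier_pos hΩ hbdd hx
  have hsub : ball x d ⊆ Ω := hd ▸ ball_infDist_frontier_subset hΩ hx
  have hhalf : ball x (d / 2) ⊆ ball x d := ball_subset_ball (half_le_self hd₀.le)
  have hΔ : ∀ y ∈ Ω, Δ u y = -(V y * Real.exp (u y)) := fun y hy ↦ by
    rw [← hpde y hy, neg_neg, lapl_eq_laplacian (hu.contDiffAt (hΩ.mem_nhds hy))]
  have hnonneg : ∀ y ∈ closure Ω, 0 ≤ u y := nonneg_of_laplacian_nonpos hΩ hbdd hcont hu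
    (fun y hy ↦ (hΔ y hy).trans_le
      (neg_nonpos.2 (mul_nonneg (hV y hy).1 (Real.exp_pos _).le))) hfrontier
  have hexp : IntegrableOn (fun y ↦ Real.exp (u y)) Ω :=
    (hcont.rexp.integrableOn_compact hbdd.isCompact_closure).mono_set subset_closure
  have hexpK : ∫ y in ball x (d / 2), Real.exp (u y) < |C₀| + 1 :=
    ((setIntegral_mono_set hexp (.of_forall fun y ↦ (Real.exp_pos _).le)
      (hhalf.trans hsub).eventuallyLE).trans hint).trans_lt hK
  obtain ⟨z, hz, hVz⟩ := exists_div_lt_of_le_setIntegral_mul measurableSet_ball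
    (hexp.mono_set (hhalf.trans hsub)) (fun y _ ↦ (Real.exp_pos _).le) hexpK hμ₀ hmass
  have haV : ∀ y ∈ ball x d, a ≤ V y := fun y hy ↦ by
    have hVzy := abs_sub_le_of_mem_ball hs₀.le
      (fun w hw v hv ↦ hVA w (hsub hw) v (hsub hv)) (hhalf hz) hy
    linarith [(abs_le.1 (hVzy.trans hda)).2]
  have hsup := hC u V x d 0 hd₀ hd₁ (hu.mono hsub) (fun y hy ↦ hΔ y (hsub hy))
    (fun y hy ↦ ⟨haV y hy, (hV y (hsub hy)).2⟩)
    (fun y hy z hz ↦ hVA y (hsub hy) z (hsub hz))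
    (fun y hy ↦ ⟨hnonneg y (subset_closure (hsub hy)), hmax y (hsub hy)⟩)
  rwa [add_zero] at hsup

theorem stmt15_general (hΩ : IsOpen Ω) (hbdd : Bornology.IsBounded Ω) (hs₀ : 0 < s) (hs₁ : s ≤ 1)
    (hμ₀ : 0 < μ₀) {b A C₀ : ℝ} {V u : ℕ → E2 → ℝ} {x : ℕ → E2} {δ : ℕ → ℝ}
    (hcont : ∀ i, ContinuousOn (u i) (closure Ω)) (hu : ∀ i, ContDiffOn ℝ 2 (u i) Ω)
    (hV : ∀ i, ∀ y ∈ Ω, 0 ≤ V i y ∧ V i y ≤ b)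
    (hVA : ∀ i, ∀ y ∈ Ω, ∀ z ∈ Ω, |V i y - V i z| ≤ A * ‖y - z‖ ^ s)
    (hpde : ∀ i, ∀ y ∈ Ω, -(lapl (u i) y) = V i y * Real.exp (u i y))
    (hfrontier : ∀ i, ∀ y ∈ frontier Ω, 0 ≤ u i y)
    (hint : ∀ i, ∫ y in Ω, Real.exp (u i y) ≤ C₀) (hx : ∀ i, x i ∈ Ω)
    (hmax : ∀ i, ∀ y ∈ Ω, u i y ≤ u i (x i)) (hδ : ∀ i, δ i = infDist (x i) (frontier Ω))
    (hδ₀ : Tendsto δ atTop (𝓝 0))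
    (hmass : ∀ᶠ i in atTop, μ₀ ≤ ∫ y in ball (x i) (δ i / 2), V i y * Real.exp (u i y)) :
    ∃ C, ∀ i, u i (x i) + 4 * Real.log (δ i) ≤ C := by
  obtain ⟨C, hC⟩ := exists_max_add_log_infDist_frontier_le hΩ hbdd b A C₀ hs₀ hs₁ hμ₀
  have hev : ∀ᶠ i in atTop, u i (x i) + 4 * Real.log (δ i) ≤ C := by
    filter_upwards [hδ₀.eventually hC, hmass] with i hi hmass
    exact hi (u i) (V i) (x i) (hδ i).symm (hcont i) (hu i) (hV i) (hVA i) (hpde i)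
      (hfrontier i) (hint i) (hx i) (hmax i) hmass
  obtain ⟨C', hC'⟩ := (isBoundedUnder_of_eventually_le hev).bddAbove_range
  exact ⟨C', forall_mem_range.1 hC'⟩

end LiouvilleProblem

theorem stmt15
    (b A s C₀ : ℝ) (hs1 : 1/2 < s) (hs2 : s ≤ 1)
    (V u : ℕ → E2 → ℝ) (x_ : ℕ → E2) (δ r : ℕ → ℝ) (v : ℕ → E2 → ℝ)
    (hu : ∀ i, ContDiffOn ℝ 2 (u i) (closedBall (0:E2) 1))
    (hVb : ∀ i, ∀ x ∈ ball (0:E2) 1, 0 ≤ V i x ∧ V i x ≤ b)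
    (hVhol : ∀ i, ∀ x ∈ ball (0:E2) 1, ∀ y ∈ ball (0:E2) 1, |V i x - V i y| ≤ A * ‖x - y‖ ^ s)
    (hpde : ∀ i, ∀ x ∈ ball (0:E2) 1, -(lapl (u i) x) = V i x * Real.exp (u i x))
    (hbc : ∀ i, ∀ x ∈ sphere (0:E2) 1, u i x = 0)
    (hint : ∀ i, (∫ y in ball (0:E2) 1, Real.exp (u i y)) ≤ C₀)
    (hxmem : ∀ i, x_ i ∈ ball (0:E2) 1)
    (hmax : ∀ i, ∀ y ∈ closedBall (0:E2) 1, u i y ≤ u i (x_ i))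
    (hblow : Tendsto (fun i => u i (x_ i)) atTop atTop)
    (hδ : ∀ i, δ i = Metric.infDist (x_ i) (sphere (0:E2) 1))
    (hδ0 : Tendsto δ atTop (nhds 0))
    (hr : ∀ i, r i = Real.exp (-(u i (x_ i)) / 2))
    (hrδ : Tendsto (fun i => r i / δ i) atTop (nhds 0))
    (hmass : Tendsto (fun i => ∫ y in ball (x_ i) (δ i / 2), V i y * Real.exp (u i y)) atTop
      (nhds (8 * Real.pi)))
    (hbound : ∀ ε : ℝ, 0 < ε → ε < 1 → ∃ Cε : ℝ, ∀ i, ∀ y : E2, ‖y‖ = ε →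
      u i (x_ i + δ i • y) ≤ Cε)
    (hv : ∀ i θ, v i θ = u i (x_ i + r i • θ) - u i (x_ i)) :
    ∃ C' : ℝ, ∀ i, u i (x_ i) + 4 * Real.log (δ i) ≤ C' :=
  stmt15_general isOpen_ball isBounded_ball (one_half_pos.trans hs1) hs2 Real.pi_pos
    (fun i ↦ (hu i).continuousOn.mono closure_ball_subset_closedBall)
    (fun i ↦ (hu i).mono ball_subset_closedBall) hVb hVhol hpde
    (fun i x hx ↦ (hbc i x (frontier_ball_subset_sphere hx)).ge) hint hxmem
    (fun i y hy ↦ hmax i y (ball_subset_closedBall hy))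
    (by rwa [frontier_ball _ one_ne_zero]) hδ0
    (hmass.eventually (le_mem_nhds (by linarith [Real.pi_pos])))
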